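/- arXiv:2605.13882 — 2 statements merged into one kernel-verified Lean document; each statement's English description precedes it below -/
import Mathlib

section
/- The integral R_C(0, 2/5) = ∫_0^∞ cos(2πx/5)/(exp(2π√x) − 1) dx converges and equals (8 − 3√5)/16. -/
open MeasureTheory Real Set

/-!
The substitution `x = t²` turns the integral into the real part of
`∫₀^∞ 2 t exp (2πit²/q) / (exp (2πt) - 1) dt` with `q = 5`. Rotating the ray of integration to the
direction `1 + i` makes the oscillating phase a Gaussian and puts the poles at the multiples of
`p = (1 + i) / 2`. The Gaussian times `t` is odd, so the integral over the half-line is, up to an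
elementary term, half of one over the whole real line.

That integral is evaluated by Mordell's method. Since `exp (-4πz²/q)` is multiplied by
`exp (-8πpz)` under `z ↦ z + qp`, subtracting from a suitable numerator its translate by `q` periods
makes the denominator cancel up to the original integrand. The difference of the two line integrals
is the sum of the residues at `0, p, …, (q - 1)p`, a finite sum of trigonometric values, and what
the cancellation leaves over are moments of Gaussians.
-/

namespace RamanujanIntegral

open Filter Topology Asymptotics
open Complex (I)
open scoped Complex

/-! ### Contour shifts in horizontal strips -/

/-- The two ends of the horizontal strip between `im z = a` and `im z = b`: `|re z| → ∞` while
`im z` stays between `a` and `b`, which may come in either order. -/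
def stripEnds (a b : ℝ) : Filter ℂ :=
  comap (fun z ↦ |z.re|) atTop ⊓ 𝓟 (Complex.im ⁻¹' uIcc a b)

variable {g : ℂ → ℂ} {a b c : ℝ}

lemma tendsto_abs_re_stripEnds (a b : ℝ) :
    Tendsto (fun z : ℂ ↦ |z.re|) (stripEnds a b) atTop :=
  tendsto_comap.mono_left inf_le_left

lemma eventually_im_mem_stripEnds (a b : ℝ) : ∀ᶠ z in stripEnds a b, z.im ∈ uIcc a b :=
  mem_inf_of_right (mem_principal_self _)

lemma eventually_ne_stripEnds (a b : ℝ) (p : ℂ) : ∀ᶠ z in stripEnds a b, z ≠ p := by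
  filter_upwards [(tendsto_abs_re_stripEnds a b).eventually_gt_atTop |p.re|] with z hz
  rintro rfl
  exact hz.false

lemma ae_add_mul_I_ne (c : ℝ) (p : ℂ) : ∀ᵐ x : ℝ, x + c * I ≠ p := by
  filter_upwards [compl_mem_ae_iff.2 (measure_singleton p.re)] with x hx h
  exact hx (by simp [← h])

lemma tendsto_stripEnds_iff {α : Type*} {l : Filter α} {f : α → ℂ} :
    Tendsto f l (stripEnds a b) ↔
      Tendsto (fun x ↦ |(f x).re|) l atTop ∧ ∀ᶠ x in l, (f x).im ∈ uIcc a b := by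
  simp only [stripEnds, tendsto_inf, tendsto_comap_iff, tendsto_principal, mem_preimage]
  rfl

lemma tendsto_add_mul_I_stripEnds (hc : c ∈ uIcc a b) :
    Tendsto (fun x : ℝ ↦ x + c * I) (cocompact ℝ) (stripEnds a b) := by
  refine tendsto_stripEnds_iff.2 ⟨?_, .of_forall fun x ↦ by simpa using hc⟩
  exact (tendsto_norm_cocompact_atTop (E := ℝ)).congr fun x ↦ by simp

lemma tendsto_add_stripEnds (w : ℂ) :
    Tendsto (· + w) (stripEnds a b) (stripEnds (a + w.im) (b + w.im)) := by
  refine tendsto_stripEnds_iff.2 ⟨?_, ?_⟩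
  · refine tendsto_atTop_mono (fun z ↦ ?_)
      (tendsto_atTop_add_const_right _ (-|w.re|) (tendsto_abs_re_stripEnds a b))
    simpa using abs_sub_abs_le_abs_add z.re w.re
  · filter_upwards [eventually_im_mem_stripEnds a b] with z hz
    rw [← image_add_const_uIcc]
    exact ⟨z.im, hz, (Complex.add_im z w).symm⟩

lemma tendsto_inv_stripEnds (a b : ℝ) : Tendsto (fun z : ℂ ↦ z⁻¹) (stripEnds a b) (𝓝 0) :=
  tendsto_inv₀_cobounded.comp <| tendsto_norm_atTop_iff_cobounded.1 <|
    tendsto_atTop_mono Complex.abs_re_le_norm (tendsto_abs_re_stripEnds a b)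

lemma tendsto_zero_of_isBigO_exp_neg (h : g =O[stripEnds a b] fun z ↦ rexp (-|z.re|)) :
    Tendsto g (stripEnds a b) (𝓝 0) :=
  h.trans_tendsto (tendsto_exp_neg_atTop_nhds_zero.comp (tendsto_abs_re_stripEnds a b))

lemma continuous_comp_add_mul_I (hg : ContinuousOn g (Complex.im ⁻¹' uIcc a b))
    (hc : c ∈ uIcc a b) : Continuous fun x : ℝ ↦ g (x + c * I) :=
  hg.comp_continuous (f := fun x : ℝ ↦ (x : ℂ) + c * I) (by fun_prop) fun x ↦ by simpa using hc

lemma integrable_exp_neg_abs : Integrable fun x : ℝ ↦ rexp (-|x|) := by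
  refine not_imp_comm.1 integral_undef ?_
  rw [integral_comp_abs (f := fun x ↦ rexp (-x)), integral_exp_neg_Ioi_zero]
  norm_num

lemma integrable_of_isBigO_exp_neg (hg : Continuous fun x : ℝ ↦ g (x + c * I))
    (hO : g =O[stripEnds a b] fun z ↦ rexp (-|z.re|)) (hc : c ∈ uIcc a b) :
    Integrable fun x : ℝ ↦ g (x + c * I) := by
  refine hg.locallyIntegrable.integrable_of_isBigO_cocompact ?_
    (integrable_exp_neg_abs.integrableAtFilter _)
  simpa [Function.comp_def] using hO.comp_tendsto (tendsto_add_mul_I_stripEnds hc)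

lemma tendsto_integral_vertical (hg : Tendsto g (stripEnds a b) (𝓝 0)) :
    Tendsto (fun R : ℝ ↦ ∫ y in a..b, g (R + y * I)) (cocompact ℝ) (𝓝 0) := by
  refine Metric.nhds_basis_closedBall.tendsto_right_iff.2 fun ε hε ↦ ?_
  have hδ : 0 < ε / (|b - a| + 1) := by positivity
  have hsmall : ∀ᶠ z in stripEnds a b, ‖g z‖ ≤ ε / (|b - a| + 1) :=
    (hg.norm.eventually_le_const (by simpa using hδ))
  rw [stripEnds, eventually_inf_principal, eventually_comap] at hsmall
  filter_upwards [(tendsto_norm_cocompact_atTop (E := ℝ)).eventually hsmall] with R hR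
  rw [mem_closedBall_zero_iff]
  calc ‖∫ y in a..b, g (R + y * I)‖ ≤ ε / (|b - a| + 1) * |b - a| :=
        intervalIntegral.norm_integral_le_of_norm_le_const fun y hy ↦
          hR (R + y * I) (by simp) (by simpa using uIoc_subset_uIcc hy)
    _ ≤ ε / (|b - a| + 1) * (|b - a| + 1) := by gcongr; linarith
    _ = ε := div_mul_cancel₀ _ (by positivity)

theorem integral_horizontal_sub_eq_zero (hd : DifferentiableOn ℂ g (Complex.im ⁻¹' uIcc a b))
    (h0 : Tendsto g (stripEnds a b) (𝓝 0))
    (hi : Integrable fun x : ℝ ↦ g (x + a * I) - g (x + b * I)) :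
    ∫ x : ℝ, (g (x + a * I) - g (x + b * I)) = 0 := by
  have hrect (R : ℝ) : ∫ x in (-R)..R, (g (x + a * I) - g (x + b * I)) =
      I • (∫ y in a..b, g ((-R : ℝ) + y * I)) - I • ∫ y in a..b, g (R + y * I) := by
    have := Complex.integral_boundary_rect_eq_zero_of_differentiableOn g ⟨-R, a⟩ ⟨R, b⟩
      (hd.mono fun z hz ↦ hz.2)
    rw [intervalIntegral.integral_sub
      ((continuous_comp_add_mul_I hd.continuousOn left_mem_uIcc).intervalIntegrable _ _)
      ((continuous_comp_add_mul_I hd.continuousOn right_mem_uIcc).intervalIntegrable _ _)]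
    linear_combination this
  have hvert := tendsto_integral_vertical h0
  have hleft := (hvert.mono_left atBot_le_cocompact).comp tendsto_neg_atTop_atBot
  have hright := hvert.mono_left atTop_le_cocompact
  have hlim := (hleft.const_smul I).sub (hright.const_smul I)
  rw [smul_zero, sub_zero] at hlim
  exact tendsto_nhds_unique
    (intervalIntegral_tendsto_integral hi tendsto_neg_atTop_atBot tendsto_id)
    (hlim.congr fun R ↦ (hrect R).symm)

theorem integral_comp_add_eq_integral {w : ℂ}
    (hd : DifferentiableOn ℂ g (Complex.im ⁻¹' uIcc 0 w.im))
    (hO : g =O[stripEnds 0 w.im] fun z ↦ rexp (-|z.re|)) :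
    ∫ x : ℝ, g (x + w) = ∫ x : ℝ, g x := by
  have hint {c : ℝ} (hc : c ∈ uIcc 0 w.im) : Integrable fun x : ℝ ↦ g (x + c * I) :=
    integrable_of_isBigO_exp_neg (continuous_comp_add_mul_I hd.continuousOn hc) hO hc
  have h0 := hint left_mem_uIcc
  have h1 := hint right_mem_uIcc
  have hstrip := integral_horizontal_sub_eq_zero hd (tendsto_zero_of_isBigO_exp_neg hO) (h0.sub h1)
  rw [integral_sub h0 h1, sub_eq_zero] at hstrip
  calc ∫ x : ℝ, g (x + w) = ∫ x : ℝ, g ((x + w.re : ℝ) + w.im * I) := by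
        simp only [Complex.ofReal_add, add_assoc, Complex.re_add_im]
    _ = ∫ x : ℝ, g (x + w.im * I) :=
        integral_add_right_eq_self (fun x : ℝ ↦ g (x + w.im * I)) w.re
    _ = ∫ x : ℝ, g x := by simpa using hstrip.symm

lemma exists_differentiableOn_eqOn_of_tendsto {s : Set ℂ} {p : ℂ} (hs : s ∈ 𝓝 p)
    (hd : DifferentiableOn ℂ g (s \ {p}))
    (hp : Tendsto (fun z ↦ (z - p) * g z) (𝓝[≠] p) (𝓝 0)) :
    ∃ G, DifferentiableOn ℂ G s ∧ ∀ z ≠ p, G z = g z := by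
  have hne : ∀ᶠ z in 𝓝[≠] p, (z - p)⁻¹ = 0 → g z = 0 := by
    filter_upwards [self_mem_nhdsWithin] with z hz h
    exact absurd (inv_eq_zero.1 h) (sub_ne_zero.2 hz)
  have hlittle : g =o[𝓝[≠] p] fun z ↦ (z - p)⁻¹ :=
    (isLittleO_iff_tendsto' hne).2 <| hp.congr fun z ↦ by rw [div_inv_eq_mul, mul_comm]
  exact ⟨Function.update g p (limUnder (𝓝[≠] p) g),
    Complex.differentiableOn_update_limUnder_of_isLittleO hs hd <| hlittle.sub <|
      IsBoundedUnder.isLittleO_sub_self_inv (f := fun _ ↦ g p) isBoundedUnder_const,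
    fun _ hz ↦ Function.update_of_ne hz _ _⟩

theorem integral_horizontal_sub_eq_zero_of_tendsto {p : ℂ} (hs : Complex.im ⁻¹' uIcc a b ∈ 𝓝 p)
    (hd : DifferentiableOn ℂ g (Complex.im ⁻¹' uIcc a b \ {p}))
    (hp : Tendsto (fun z ↦ (z - p) * g z) (𝓝[≠] p) (𝓝 0)) (h0 : Tendsto g (stripEnds a b) (𝓝 0))
    (hi : Integrable fun x : ℝ ↦ g (x + a * I) - g (x + b * I)) :
    ∫ x : ℝ, (g (x + a * I) - g (x + b * I)) = 0 := by
  obtain ⟨G, hG, hGg⟩ := exists_differentiableOn_eqOn_of_tendsto hs hd hp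
  have hends : g =ᶠ[stripEnds a b] G :=
    (eventually_ne_stripEnds a b p).mono fun z hz ↦ (hGg z hz).symm
  have hdiff : (fun x : ℝ ↦ g (x + a * I) - g (x + b * I)) =ᵐ[volume]
      fun x ↦ G (x + a * I) - G (x + b * I) := by
    filter_upwards [ae_add_mul_I_ne a p, ae_add_mul_I_ne b p] with x ha hb
    rw [hGg _ ha, hGg _ hb]
  rw [integral_congr_ae hdiff]
  exact integral_horizontal_sub_eq_zero hG (h0.congr' hends) (hi.congr hdiff)

lemma inv_sub_mul_I_sub_inv_add_mul_I (hc : c ≠ 0) (x : ℝ) :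
    ((x + (-c : ℝ) * I)⁻¹ - (x + c * I)⁻¹ : ℂ) = (2 * c⁻¹ * I) * ((1 + (c⁻¹ * x) ^ 2)⁻¹ : ℝ) := by
  have hne (d : ℝ) (hd : d ≠ 0) : (x + d * I : ℂ) ≠ 0 := fun h ↦ hd (by simpa using congr(($h).im))
  have hc' : (c : ℂ) ≠ 0 := Complex.ofReal_ne_zero.2 hc
  have hprod : (x + (-c : ℝ) * I) * (x + c * I) = c ^ 2 * ((1 + (c⁻¹ * x) ^ 2 : ℝ) : ℂ) := by
    push_cast
    field_simp
    linear_combination -(c : ℂ) ^ 2 * Complex.I_sq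
  rw [inv_sub_inv (hne _ (neg_ne_zero.2 hc)) (hne _ hc), hprod]
  push_cast
  generalize 1 + ((c : ℂ)⁻¹ * x) ^ 2 = d
  field_simp
  ring

lemma integrable_inv_sub_inv (hc : c ≠ 0) :
    Integrable fun x : ℝ ↦ ((x + (-c : ℝ) * I)⁻¹ - (x + c * I)⁻¹ : ℂ) := by
  simp_rw [inv_sub_mul_I_sub_inv_add_mul_I hc]
  exact (integrable_inv_one_add_sq.comp_mul_left' (inv_ne_zero hc)).ofReal.const_mul _

lemma integral_inv_sub_inv (hc : 0 < c) :
    ∫ x : ℝ, ((x + (-c : ℝ) * I)⁻¹ - (x + c * I)⁻¹ : ℂ) = 2 * π * I := by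
  simp_rw [inv_sub_mul_I_sub_inv_add_mul_I hc.ne']
  rw [integral_const_mul, integral_complex_ofReal,
    Measure.integral_comp_mul_left (fun x : ℝ ↦ (1 + x ^ 2)⁻¹), integral_univ_inv_one_add_sq,
    inv_inv, abs_of_pos hc]
  have hc' : (c : ℂ) ≠ 0 := Complex.ofReal_ne_zero.2 hc.ne'
  push_cast [smul_eq_mul]
  field_simp

lemma strip_mem_nhds_zero (hc : 0 < c) : Complex.im ⁻¹' uIcc (-c) c ∈ 𝓝 0 := by
  refine Complex.continuous_im.continuousAt.preimage_mem_nhds ?_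
  rw [uIcc_of_le (by linarith)]
  exact Icc_mem_nhds (by simpa using hc) (by simpa using hc)

theorem integral_horizontal_sub_eq_residue {r : ℂ} (hc : 0 < c)
    (hd : DifferentiableOn ℂ g (Complex.im ⁻¹' uIcc (-c) c \ {0}))
    (hr : Tendsto (fun z ↦ z * g z) (𝓝[≠] 0) (𝓝 r)) (h0 : Tendsto g (stripEnds (-c) c) (𝓝 0))
    (hi : Integrable fun x : ℝ ↦ g (x + (-c : ℝ) * I) - g (x + c * I)) :
    ∫ x : ℝ, (g (x + (-c : ℝ) * I) - g (x + c * I)) = 2 * π * I * r := by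
  have hpole : Tendsto (fun z ↦ (z - 0) * (g z - r * z⁻¹)) (𝓝[≠] 0) (𝓝 0) := by
    refine (sub_self r ▸ hr.sub_const r).congr' ?_
    filter_upwards [self_mem_nhdsWithin] with z (hz : z ≠ 0)
    rw [sub_zero]
    field_simp
  have hsplit (x : ℝ) : g (x + (-c : ℝ) * I) - g (x + c * I) =
      (g (x + (-c : ℝ) * I) - r * (x + (-c : ℝ) * I)⁻¹ - (g (x + c * I) - r * (x + c * I)⁻¹)) +
        r * ((x + (-c : ℝ) * I)⁻¹ - (x + c * I)⁻¹) := by ring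
  have hinv := (integrable_inv_sub_inv hc.ne').const_mul r
  have hreg := (hi.sub hinv).congr (ae_of_all _ fun x ↦ sub_eq_of_eq_add (hsplit x))
  simp_rw [hsplit]
  rw [integral_add hreg hinv, integral_const_mul, integral_inv_sub_inv hc,
    integral_horizontal_sub_eq_zero_of_tendsto (g := fun z ↦ g z - r * z⁻¹)
      (strip_mem_nhds_zero hc)
      (hd.sub ((differentiableOn_inv.mono fun z hz ↦ hz.2).const_mul r)) hpole
      (by simpa using h0.sub ((tendsto_inv_stripEnds (-c) c).const_mul r)) hreg]
  ring

/-! ### Rapidly decreasing entire functions -/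

/-- Entire functions that decay faster than every exponential at both ends of every horizontal
strip. These are the numerators whose contour integrals may be shifted vertically at will. -/
structure RapidlyDecreasing (f : ℂ → ℂ) : Prop where
  differentiable : Differentiable ℂ f
  isBigO (a b N : ℝ) : f =O[stripEnds a b] fun z ↦ rexp (-(N * |z.re|))

lemma exists_forall_abs_im_le (a b : ℝ) : ∃ Y, 0 ≤ Y ∧ ∀ᶠ z in stripEnds a b, |z.im| ≤ Y := by
  obtain ⟨Y, hY⟩ := (isCompact_uIcc (a := a) (b := b)).isBounded.exists_norm_le
  exact ⟨Y, (norm_nonneg a).trans (hY a left_mem_uIcc),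
    (eventually_im_mem_stripEnds a b).mono fun z hz ↦ hY _ hz⟩

lemma isBigO_id_exp_abs_re (a b : ℝ) : (fun z : ℂ ↦ z) =O[stripEnds a b] fun z ↦ rexp |z.re| := by
  obtain ⟨Y, hY0, hY⟩ := exists_forall_abs_im_le a b
  refine .of_bound (1 + Y) (hY.mono fun z hz ↦ ?_)
  rw [norm_of_nonneg (exp_nonneg _)]
  calc ‖z‖ ≤ |z.re| + |z.im| := Complex.norm_le_abs_re_add_abs_im z
    _ ≤ rexp |z.re| + Y * rexp |z.re| := by
        gcongr
        · linarith [add_one_le_exp |z.re|]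
        · exact hz.trans (le_mul_of_one_le_right hY0 (one_le_exp (abs_nonneg _)))
    _ = (1 + Y) * rexp |z.re| := by ring

namespace RapidlyDecreasing

variable {f f₁ f₂ : ℂ → ℂ}

lemma add (h₁ : RapidlyDecreasing f₁) (h₂ : RapidlyDecreasing f₂) :
    RapidlyDecreasing fun z ↦ f₁ z + f₂ z :=
  ⟨h₁.differentiable.add h₂.differentiable, fun a b N ↦ (h₁.isBigO a b N).add (h₂.isBigO a b N)⟩

lemma const_mul (hf : RapidlyDecreasing f) (w : ℂ) : RapidlyDecreasing fun z ↦ w * f z :=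
  ⟨hf.differentiable.const_mul w, fun a b N ↦ (hf.isBigO a b N).const_mul_left w⟩

lemma id_mul (hf : RapidlyDecreasing f) : RapidlyDecreasing fun z ↦ z * f z where
  differentiable := differentiable_id.mul hf.differentiable
  isBigO a b N := by
    refine ((isBigO_id_exp_abs_re a b).mul (hf.isBigO a b (N + 1))).congr_right fun z ↦ ?_
    rw [← exp_add]
    ring_nf

lemma polynomial_mul (hf : RapidlyDecreasing f) (P : Polynomial ℂ) :
    RapidlyDecreasing fun z ↦ P.eval z * f z := by
  induction P using Polynomial.induction_on' with
  | add P Q hP hQ => simpa only [Polynomial.eval_add, add_mul] using hP.add hQ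
  | monomial n w =>
    induction n with
    | zero => simpa using hf.const_mul w
    | succ n ih =>
      simpa only [Polynomial.eval_monomial, pow_succ', mul_assoc, mul_left_comm w] using ih.id_mul

lemma comp_add_const (hf : RapidlyDecreasing f) (w : ℂ) :
    RapidlyDecreasing fun z ↦ f (z + w) where
  differentiable := hf.differentiable.comp (differentiable_id.add_const w)
  isBigO a b N := by
    refine ((hf.isBigO _ _ N).comp_tendsto (tendsto_add_stripEnds w)).trans ?_
    refine Real.isBigO_exp_comp_exp_comp.2 ⟨|N| * |w.re|, eventually_map.2 (.of_forall fun z ↦ ?_)⟩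
    calc -(N * |(z + w).re|) - -(N * |z.re|) ≤ |N * (|z.re| - |(z + w).re|)| := by
          rw [mul_sub]
          exact le_trans (by linarith) (le_abs_self _)
      _ = |N| * |(|z.re| - |(z + w).re|)| := abs_mul _ _
      _ ≤ |N| * |w.re| := by
          refine mul_le_mul_of_nonneg_left ?_ (abs_nonneg _)
          simpa only [Complex.add_re, sub_add_cancel_left, abs_neg] using
            abs_abs_sub_abs_le z.re (z + w).re

lemma isBigO_exp_neg (hf : RapidlyDecreasing f) (a b : ℝ) :
    f =O[stripEnds a b] fun z ↦ rexp (-|z.re|) := by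
  simpa using hf.isBigO a b 1

lemma integrable (hf : RapidlyDecreasing f) (c : ℝ) : Integrable fun x : ℝ ↦ f (x + c * I) :=
  integrable_of_isBigO_exp_neg (continuous_comp_add_mul_I (b := c)
    hf.differentiable.continuous.continuousOn left_mem_uIcc) (hf.isBigO_exp_neg c c) left_mem_uIcc

theorem integral_comp_add (hf : RapidlyDecreasing f) (w : ℂ) :
    ∫ x : ℝ, f (x + w) = ∫ x : ℝ, f x :=
  integral_comp_add_eq_integral hf.differentiable.differentiableOn (hf.isBigO_exp_neg _ _)

end RapidlyDecreasing

theorem rapidlyDecreasing_cexp_quadratic {α : ℂ} (hα : 0 < α.re) (β : ℂ) :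
    RapidlyDecreasing fun z ↦ cexp (-α * z ^ 2 + β * z) where
  differentiable := by fun_prop
  isBigO a b N := by
    obtain ⟨Y, -, hY⟩ := exists_forall_abs_im_le a b
    have hre (z : ℂ) : (-α * z ^ 2 + β * z).re =
        -(α.re * |z.re| ^ 2) + (2 * α.im * z.im + β.re) * z.re + α.re * z.im ^ 2 - β.im * z.im := by
      simp only [pow_two, neg_mul, Complex.add_re, Complex.neg_re, Complex.mul_re, Complex.mul_im,
        neg_sub, abs_mul_abs_self]
      ring
    set M := 2 * |α.im| * Y + |β.re|
    rw [← isBigO_norm_left]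
    simp only [Complex.norm_exp]
    refine Real.isBigO_exp_comp_exp_comp.2 ⟨(M + N) ^ 2 / (4 * α.re) + α.re * Y ^ 2 + |β.im| * Y,
      eventually_map.2 (hY.mono fun z hz ↦ ?_)⟩
    have hlin : (2 * α.im * z.im + β.re) * z.re ≤ M * |z.re| := by
      refine (le_abs_self _).trans ?_
      rw [abs_mul]
      gcongr
      refine (abs_add_le _ _).trans ?_
      rw [abs_mul, abs_mul, abs_two]
      exact add_le_add_left (mul_le_mul_of_nonneg_left hz (by positivity)) _
    have hsq : α.re * z.im ^ 2 ≤ α.re * Y ^ 2 := by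
      rw [← sq_abs]
      gcongr
    have hconst : -(β.im * z.im) ≤ |β.im| * Y := by
      refine (neg_le_abs _).trans ?_
      rw [abs_mul]
      gcongr
    have hquad : -(α.re * |z.re| ^ 2) + (M + N) * |z.re| ≤ (M + N) ^ 2 / (4 * α.re) := by
      rw [le_div_iff₀ (by positivity)]
      linarith [sq_nonneg (2 * α.re * |z.re| - (M + N))]
    simp only [Pi.sub_apply, hre]
    linarith

/-! ### The periodic kernel and its residues -/

/-- The kernel `1 / (exp (2 * π * I * z / p) - 1)`: it has period `p` and its poles are the
multiples of `p`, where its value here is `0`. -/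
noncomputable def kernel (p z : ℂ) : ℂ := (cexp (2 * π * I * z / p) - 1)⁻¹

variable {p z : ℂ}

lemma kernel_add_self (hp : p ≠ 0) (z : ℂ) : kernel p (z + p) = kernel p z := by
  have hexp : 2 * π * I * (z + p) / p = 2 * π * I * z / p + 2 * π * I := by field_simp
  rw [kernel, hexp, Complex.exp_periodic, kernel]

lemma kernel_neg (hz : cexp (2 * π * I * z / p) ≠ 1) : kernel p (-z) = -1 - kernel p z := by
  simp only [kernel, mul_neg, neg_div, Complex.exp_neg]
  have h₁ := sub_ne_zero.2 hz
  have h₂ := sub_ne_zero.2 hz.symm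
  have h₀ := Complex.exp_ne_zero (2 * π * I * z / p)
  generalize cexp (2 * π * I * z / p) = E at *
  field_simp
  ring

lemma cexp_ne_one_of_abs_im_lt (hz : |z.im| < p.im) (h0 : z ≠ 0) :
    cexp (2 * π * I * z / p) ≠ 1 := by
  have hp : p ≠ 0 := by
    rintro rfl
    exact (abs_nonneg _).not_gt hz
  rw [Ne, Complex.exp_eq_one_iff]
  rintro ⟨n, hn⟩
  have hzn : z = n * p := by
    field_simp at hn
    rw [hn, mul_comm]
  have hn1 : |(n : ℝ)| < 1 := by
    have him : 0 < p.im := (abs_nonneg _).trans_lt hz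
    have hnp : |(n : ℝ)| * p.im < p.im := by
      simpa [hzn, abs_mul, abs_of_pos him] using hz
    exact (mul_lt_iff_lt_one_left him).1 hnp
  have : n = 0 := Int.abs_lt_one_iff.1 (by exact_mod_cast hn1)
  exact h0 (by simp [hzn, this])

lemma differentiableAt_kernel (hz : cexp (2 * π * I * z / p) ≠ 1) :
    DifferentiableAt ℂ (kernel p) z := by
  unfold kernel
  exact DifferentiableAt.inv (by fun_prop) (sub_ne_zero.2 hz)

lemma tendsto_id_mul_kernel (p : ℂ) :
    Tendsto (fun z ↦ z * kernel p z) (𝓝[≠] 0) (𝓝 (p / (2 * π * I))) := by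
  rcases eq_or_ne p 0 with rfl | hp
  · simp [kernel]
  have hderiv : HasDerivAt (fun z ↦ cexp (2 * π * I * z / p)) (2 * π * I / p) 0 := by
    simpa using (((hasDerivAt_id (0 : ℂ)).const_mul (2 * π * I)).div_const p).cexp
  have hne : 2 * π * I / p ≠ 0 := div_ne_zero Complex.two_pi_I_ne_zero hp
  have hslope := (hasDerivAt_iff_tendsto_slope.1 hderiv).inv₀ hne
  rw [inv_div] at hslope
  refine hslope.congr fun z ↦ ?_
  simp [slope_def_field, kernel, div_eq_mul_inv]

lemma norm_inv_cexp_sub_one_le_two {w : ℂ} (hw : 1 ≤ |w.re|) : ‖(cexp w - 1)⁻¹‖ ≤ 2 := by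
  have hexp : 1 / 2 ≤ |rexp w.re - 1| := by
    rcases le_abs.1 hw with h | h
    · exact (by linarith [add_one_le_exp w.re] : 1 / 2 ≤ rexp w.re - 1).trans (le_abs_self _)
    · have : rexp w.re ≤ 1 / 2 := by
        rw [← inv_inv (rexp _), ← Real.exp_neg, ← one_div]
        exact one_div_le_one_div_of_le two_pos (by linarith [add_one_le_exp (-w.re)])
      exact (by linarith : 1 / 2 ≤ -(rexp w.re - 1)).trans (neg_le_abs _)
  rw [norm_inv]
  refine inv_le_of_inv_le₀ two_pos ?_
  calc (2 : ℝ)⁻¹ ≤ |‖cexp w‖ - ‖(1 : ℂ)‖| := by simpa [Complex.norm_exp] using hexp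
    _ ≤ ‖cexp w - 1‖ := abs_norm_sub_norm_le _ _

lemma isBigO_kernel_one (hp : 0 < p.im) (a b : ℝ) :
    kernel p =O[stripEnds a b] fun _ ↦ (1 : ℝ) := by
  obtain ⟨Y, -, hY⟩ := exists_forall_abs_im_le a b
  have hN : 0 < Complex.normSq p := Complex.normSq_pos.2 fun h ↦ by simp [h] at hp
  have hre (z : ℂ) : (2 * π * I * z / p).re =
      2 * π * (p.im * z.re - p.re * z.im) / Complex.normSq p := by
    simp only [Complex.div_re, Complex.mul_re, Complex.mul_im, Complex.re_ofNat, Complex.im_ofNat,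
      Complex.ofReal_re, Complex.ofReal_im, Complex.I_re, Complex.I_im, mul_zero, zero_mul,
      mul_one, sub_zero, zero_sub, add_zero, zero_add, sub_self, neg_mul]
    ring
  have hlim : Tendsto (fun z : ℂ ↦ 2 * π * (p.im * |z.re| - |p.re| * Y) / Complex.normSq p)
      (stripEnds a b) atTop :=
    ((tendsto_atTop_add_const_right _ _ <|
      (tendsto_abs_re_stripEnds a b).const_mul_atTop hp).const_mul_atTop two_pi_pos).atTop_div_const
        hN
  refine .of_bound 2 ?_
  filter_upwards [hlim.eventually_ge_atTop 1, hY] with z hz hzY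
  rw [norm_one, mul_one]
  refine norm_inv_cexp_sub_one_le_two (hz.trans ?_)
  rw [hre, abs_div, abs_mul, abs_of_pos two_pi_pos, abs_of_pos hN]
  gcongr
  calc p.im * |z.re| - |p.re| * Y ≤ |p.im * z.re| - |p.re * z.im| := by
        rw [abs_mul, abs_mul, abs_of_pos hp]
        gcongr
    _ ≤ |p.im * z.re - p.re * z.im| := abs_sub_abs_le_abs_sub _ _

lemma differentiableOn_kernel (hp : 0 < p.im) :
    DifferentiableOn ℂ (kernel p) (Complex.im ⁻¹' uIcc (-(p.im / 2)) (p.im / 2) \ {0}) := by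
  rintro z ⟨hz, h0⟩
  rw [mem_preimage, uIcc_of_le (by linarith), mem_Icc, ← abs_le] at hz
  exact (differentiableAt_kernel
    (cexp_ne_one_of_abs_im_lt (by linarith) h0)).differentiableWithinAt

namespace RapidlyDecreasing

variable {f φ : ℂ → ℂ}

lemma isBigO_mul_kernel (hf : RapidlyDecreasing f) (hp : 0 < p.im) (a b : ℝ) :
    (fun z ↦ f z * kernel p z) =O[stripEnds a b] fun z ↦ rexp (-|z.re|) := by
  simpa using (hf.isBigO_exp_neg a b).mul (isBigO_kernel_one hp a b)

lemma integrable_mul_kernel_line (hf : RapidlyDecreasing f) (hp : 0 < p.im) {c : ℝ}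
    (hc0 : c ≠ 0) (hc : c ∈ uIcc (-(p.im / 2)) (p.im / 2)) :
    Integrable fun x : ℝ ↦ f (x + c * I) * kernel p (x + c * I) := by
  refine integrable_of_isBigO_exp_neg (g := fun z ↦ f z * kernel p z) ?_
    (hf.isBigO_mul_kernel hp _ _) hc
  refine (hf.differentiable.differentiableOn.mul (differentiableOn_kernel hp)).continuousOn
    |>.comp_continuous (f := fun x : ℝ ↦ (x : ℂ) + c * I) (by fun_prop) fun x ↦
      ⟨by simpa using hc, fun h ↦ hc0 ?_⟩
  simpa using congr(($h).im)

lemma tendsto_id_mul_mul_kernel (hf : RapidlyDecreasing f) (p : ℂ) :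
    Tendsto (fun z ↦ z * (f z * kernel p z)) (𝓝[≠] 0) (𝓝 (f 0 * (p / (2 * π * I)))) := by
  have hf0 := hf.differentiable.continuous.continuousAt (x := 0)
  exact ((hf0.tendsto.mono_left nhdsWithin_le_nhds).mul
    (tendsto_id_mul_kernel p)).congr fun z ↦ mul_left_comm _ _ _

lemma exists_regularization (hφ : RapidlyDecreasing φ) (h0 : φ 0 = 0) (hp : 0 < p.im) :
    ∃ G, DifferentiableOn ℂ G (Complex.im ⁻¹' uIcc (-(p.im / 2)) (p.im / 2)) ∧
      (∀ z ≠ 0, G z = φ z * kernel p z) ∧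
        ∀ a b, G =O[stripEnds a b] fun z ↦ rexp (-|z.re|) := by
  have hpole : Tendsto (fun z ↦ (z - 0) * (φ z * kernel p z)) (𝓝[≠] 0) (𝓝 0) := by
    simpa only [sub_zero, h0, zero_mul] using hφ.tendsto_id_mul_mul_kernel p
  obtain ⟨G, hG, hGφ⟩ := exists_differentiableOn_eqOn_of_tendsto
    (strip_mem_nhds_zero (half_pos hp))
    (hφ.differentiable.differentiableOn.mul (differentiableOn_kernel hp)) hpole
  refine ⟨G, hG, hGφ, fun a b ↦ (hφ.isBigO_mul_kernel hp a b).congr' ?_ .rfl⟩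
  exact (eventually_ne_stripEnds a b 0).mono fun z hz ↦ (hGφ z hz).symm

lemma integrable_mul_kernel (hφ : RapidlyDecreasing φ) (h0 : φ 0 = 0) (hp : 0 < p.im) :
    Integrable fun x : ℝ ↦ φ x * kernel p x := by
  obtain ⟨G, hG, hGφ, hO⟩ := hφ.exists_regularization h0 hp
  have h0mem : (0 : ℝ) ∈ uIcc (-(p.im / 2)) (p.im / 2) :=
    mem_uIcc_of_le (by linarith) (by linarith)
  refine (integrable_of_isBigO_exp_neg (continuous_comp_add_mul_I hG.continuousOn h0mem)
    (hO _ _) h0mem).congr ?_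
  filter_upwards [ae_add_mul_I_ne 0 0] with x hx
  rw [hGφ _ hx]
  simp

theorem integral_mul_kernel_eq_line (hφ : RapidlyDecreasing φ) (h0 : φ 0 = 0) (hp : 0 < p.im) :
    ∫ x : ℝ, φ (x + (-(p.im / 2) : ℝ) * I) * kernel p (x + (-(p.im / 2) : ℝ) * I) =
      ∫ x : ℝ, φ x * kernel p x := by
  obtain ⟨G, hG, hGφ, hO⟩ := hφ.exists_regularization h0 hp
  have hline (c : ℝ) : ∫ x : ℝ, φ (x + c * I) * kernel p (x + c * I) = ∫ x : ℝ, G (x + c * I) :=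
    integral_congr_ae <| (ae_add_mul_I_ne c 0).mono fun x hx ↦ (hGφ _ hx).symm
  have hreal := hline 0
  simp only [Complex.ofReal_zero, zero_mul, add_zero] at hreal
  rw [hline, hreal]
  refine integral_comp_add_eq_integral (hG.mono (preimage_mono ?_)) (hO _ _)
  rw [Complex.mul_I_im, Complex.ofReal_re]
  exact uIcc_subset_uIcc (mem_uIcc_of_le (by linarith) (by linarith)) left_mem_uIcc

theorem integral_sub_mul_kernel (hf : RapidlyDecreasing f) (hp : 0 < p.im) :
    ∫ x : ℝ, (f (x + (-(p.im / 2) : ℝ) * I) - f (x + (-(p.im / 2) : ℝ) * I + p)) *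
      kernel p (x + (-(p.im / 2) : ℝ) * I) = p * f 0 := by
  set c := p.im / 2 with hc_def
  have hc : 0 < c := half_pos hp
  have hp0 : p ≠ 0 := by
    rintro rfl
    simp at hp
  set g := fun z ↦ f z * kernel p z
  have hlow : Integrable fun x : ℝ ↦ g (x + (-c : ℝ) * I) :=
    hf.integrable_mul_kernel_line hp (neg_ne_zero.2 hc.ne') left_mem_uIcc
  have hhigh : Integrable fun x : ℝ ↦ g (x + c * I) :=
    hf.integrable_mul_kernel_line hp hc.ne' right_mem_uIcc
  have hshift (x : ℝ) : (x + (-c : ℝ) * I + p : ℂ) = (x + p.re : ℝ) + c * I := by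
    apply Complex.ext <;> simp [hc_def, ← sub_eq_neg_add, sub_half]
  calc ∫ x : ℝ, (f (x + (-c : ℝ) * I) - f (x + (-c : ℝ) * I + p)) * kernel p (x + (-c : ℝ) * I)
      = ∫ x : ℝ, (g (x + (-c : ℝ) * I) - g ((x + p.re : ℝ) + c * I)) := by
        refine integral_congr_ae (ae_of_all _ fun x ↦ ?_)
        simp only [g, sub_mul]
        rw [← hshift, kernel_add_self hp0]
    _ = ∫ x : ℝ, (g (x + (-c : ℝ) * I) - g (x + c * I)) := by
        rw [integral_sub hlow (hhigh.comp_add_right p.re), integral_sub hlow hhigh,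
          integral_add_right_eq_self (fun x : ℝ ↦ g (x + c * I)) p.re]
    _ = 2 * π * I * (f 0 * (p / (2 * π * I))) := by
        refine integral_horizontal_sub_eq_residue hc
          (hf.differentiable.differentiableOn.mul (differentiableOn_kernel hp))
          (hf.tendsto_id_mul_mul_kernel p)
          (tendsto_zero_of_isBigO_exp_neg (hf.isBigO_mul_kernel hp _ _)) (hlow.sub hhigh)
    _ = p * f 0 := by
        field_simp

theorem integral_sub_mul_kernel_eq_sum (hf : RapidlyDecreasing f) (hp : 0 < p.im) (n : ℕ) :
    ∫ x : ℝ, (f (x + (-(p.im / 2) : ℝ) * I) - f (x + (-(p.im / 2) : ℝ) * I + n * p)) *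
      kernel p (x + (-(p.im / 2) : ℝ) * I) = p * ∑ k ∈ Finset.range n, f (k * p) := by
  set ℓ : ℝ → ℂ := fun x ↦ x + (-(p.im / 2) : ℝ) * I
  have hint (k : ℕ) : Integrable fun x ↦ (f (ℓ x + k * p) - f (ℓ x + (k + 1 : ℕ) * p)) *
      kernel p (ℓ x) := by
    simp only [sub_mul]
    exact .sub ((hf.comp_add_const _).integrable_mul_kernel_line hp (by linarith) left_mem_uIcc)
      ((hf.comp_add_const _).integrable_mul_kernel_line hp (by linarith) left_mem_uIcc)
  calc ∫ x : ℝ, (f (ℓ x) - f (ℓ x + n * p)) * kernel p (ℓ x)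
      = ∫ x : ℝ, ∑ k ∈ Finset.range n, (f (ℓ x + k * p) - f (ℓ x + (k + 1 : ℕ) * p)) *
          kernel p (ℓ x) := by
        refine integral_congr_ae (ae_of_all _ fun x ↦ ?_)
        dsimp only
        rw [← Finset.sum_mul, Finset.sum_range_sub' fun k : ℕ ↦ f (ℓ x + k * p)]
        simp
    _ = ∑ k ∈ Finset.range n, p * f (k * p) := by
        rw [integral_finsetSum _ fun k _ ↦ hint k]
        refine Finset.sum_congr rfl fun k _ ↦ ?_
        simpa [ℓ, add_mul, add_assoc, add_comm p] using
          (hf.comp_add_const (k * p)).integral_sub_mul_kernel hp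
    _ = p * ∑ k ∈ Finset.range n, f (k * p) := (Finset.mul_sum _ _ _).symm

end RapidlyDecreasing

/-! ### Gaussian moments -/

open Polynomial in
lemma integral_deriv_polynomial_mul_cexp_quadratic {α : ℂ} (hα : 0 < α.re) (β : ℂ) (P : ℂ[X]) :
    ∫ x : ℝ, ((derivative P).eval (x : ℂ) + P.eval (x : ℂ) * (β - 2 * α * x)) *
      cexp (-α * x ^ 2 + β * x) = 0 := by
  have hG := rapidlyDecreasing_cexp_quadratic hα β
  have hderiv (x : ℝ) : HasDerivAt (fun x : ℝ ↦ P.eval (x : ℂ) * cexp (-α * x ^ 2 + β * x))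
      (((derivative P).eval (x : ℂ) + P.eval (x : ℂ) * (β - 2 * α * x)) *
        cexp (-α * x ^ 2 + β * x)) x := by
    have hphase : HasDerivAt (fun z : ℂ ↦ -α * z ^ 2 + β * z) (β - 2 * α * x) x := by
      refine (((hasDerivAt_pow 2 (x : ℂ)).const_mul (-α)).add
        ((hasDerivAt_id _).const_mul β)).congr_deriv ?_
      push_cast
      ring
    exact ((P.hasDerivAt (x : ℂ)).mul hphase.cexp).comp_ofReal.congr_deriv (by ring)
  refine integral_eq_zero_of_hasDerivAt_of_integrable hderiv ?_ ?_
  · have hP := hG.polynomial_mul (derivative P + P * (C β - C (2 * α) * X))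
    simpa only [eval_add, eval_sub, eval_mul, eval_C, eval_X, Complex.ofReal_zero, zero_mul,
      add_zero] using hP.integrable 0
  · simpa using (hG.polynomial_mul P).integrable 0

lemma integral_cexp_neg_mul_sq_add_mul {α : ℂ} (hα : 0 < α.re) (β : ℂ) :
    ∫ x : ℝ, cexp (-α * x ^ 2 + β * x) = (π / α) ^ (1 / 2 : ℂ) * cexp (β ^ 2 / (4 * α)) := by
  simpa [div_neg, sub_neg_eq_add] using integral_cexp_quadratic (b := -α) (by simpa) β 0

open Polynomial in
theorem integral_mul_add_mul_cexp_quadratic {α : ℂ} (hα : 0 < α.re) (β u : ℂ) :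
    ∫ x : ℝ, x * (x + u) * cexp (-α * x ^ 2 + β * x) =
      (1 / (2 * α) + β ^ 2 / (4 * α ^ 2) + u * β / (2 * α)) *
        ((π / α) ^ (1 / 2 : ℂ) * cexp (β ^ 2 / (4 * α))) := by
  have hα0 : α ≠ 0 := by
    rintro rfl
    exact hα.false
  set m := 1 / (2 * α) + β ^ 2 / (4 * α ^ 2) + u * β / (2 * α) with hm
  have hG := rapidlyDecreasing_cexp_quadratic hα β
  have hconst : Integrable fun x : ℝ ↦ m * cexp (-α * x ^ 2 + β * x) := by
    simpa using (hG.const_mul m).integrable 0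
  have hquad : Integrable fun x : ℝ ↦ x * (x + u) * cexp (-α * x ^ 2 + β * x) := by
    have hP := hG.polynomial_mul (X * (X + C u))
    simpa only [eval_add, eval_mul, eval_C, eval_X, Complex.ofReal_zero, zero_mul, add_zero]
      using hP.integrable 0
  -- Up to sign, the difference of the two integrands is the derivative of the Gaussian times the
  -- linear polynomial with coefficients `1 / (2 * α)` and `(u + β / (2 * α)) / (2 * α)`.
  have hibp := integral_deriv_polynomial_mul_cexp_quadratic hα β
    (C ((u + β / (2 * α)) / (2 * α)) + C (1 / (2 * α)) * X)
  rw [← integral_cexp_neg_mul_sq_add_mul hα, ← integral_const_mul, eq_comm, ← sub_eq_zero,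
    ← integral_sub hconst hquad, ← hibp]
  congr with x
  simp only [derivative_add, derivative_C, derivative_mul, derivative_X, eval_add, eval_mul,
    eval_C, eval_X, eval_one, zero_mul, zero_add, hm]
  field_simp
  ring

theorem RapidlyDecreasing.integral_mul_kernel_of_odd {φ : ℂ → ℂ} (hφ : RapidlyDecreasing φ)
    (hodd : ∀ z, φ (-z) = -φ z) (hp : 0 < p.im) :
    ∫ x : ℝ, φ x * kernel p x =
      2 * (∫ x in Ioi (0 : ℝ), φ x * kernel p x) + ∫ x in Ioi (0 : ℝ), φ x := by
  have hφ0 : φ 0 = 0 := self_eq_neg.1 (by simpa using hodd 0)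
  have hint := hφ.integrable_mul_kernel hφ0 hp
  have hφint : Integrable fun x : ℝ ↦ φ x := by simpa using hφ.integrable 0
  have hneg (x : ℝ) (hx : x ∈ Ioi (0 : ℝ)) :
      φ (-x : ℝ) * kernel p (-x : ℝ) = φ x * kernel p x + φ x := by
    have hne : cexp (2 * π * I * x / p) ≠ 1 :=
      cexp_ne_one_of_abs_im_lt (by simpa using hp) (Complex.ofReal_ne_zero.2 hx.ne')
    rw [Complex.ofReal_neg, hodd, kernel_neg hne]
    ring
  have hleft : ∫ x in Iic (0 : ℝ), φ x * kernel p x =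
      (∫ x in Ioi (0 : ℝ), φ x * kernel p x) + ∫ x in Ioi (0 : ℝ), φ x := by
    rw [← integral_add hint.integrableOn hφint.integrableOn,
      ← setIntegral_congr_fun measurableSet_Ioi hneg,
      integral_comp_neg_Ioi 0 fun x : ℝ ↦ φ x * kernel p x, neg_zero]
  rw [← intervalIntegral.integral_Iic_add_Ioi hint.integrableOn hint.integrableOn, hleft]
  ring

/-! ### Rotation of a half-line -/

section Rotation

variable {E : Type*} [NormedAddCommGroup E] [NormedSpace ℝ E]

lemma integrable_exp_smul_comp_exp_iff {f : ℝ → E} :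
    Integrable (fun x ↦ rexp x • f (rexp x)) ↔ IntegrableOn f (Ioi 0) := by
  simpa [abs_exp] using (integrableOn_image_iff_integrableOn_abs_deriv_smul .univ
    (fun x _ ↦ (Real.hasDerivAt_exp x).hasDerivWithinAt) exp_injective.injOn f).symm

lemma integral_exp_smul_comp_exp (f : ℝ → E) :
    ∫ x, rexp x • f (rexp x) = ∫ t in Ioi 0, f t := by
  simpa [abs_exp] using (integral_image_eq_integral_abs_deriv_smul .univ
    (fun x _ ↦ (Real.hasDerivAt_exp x).hasDerivWithinAt) exp_injective.injOn f).symm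

/-- The closed sector of nonzero complex numbers with an argument between `0` and `θ`. It is
encoded as the image of a strip so that `θ` may be any real number. -/
def sector (θ : ℝ) : Set ℂ := cexp '' (Complex.im ⁻¹' uIcc 0 θ)

lemma exp_mul_div_le_exp_neg_abs (x : ℝ) : rexp x / (1 + rexp x ^ 2) ≤ rexp (-|x|) := by
  have hx := exp_pos x
  rw [div_le_iff₀ (by positivity)]
  rcases abs_cases x with ⟨h, -⟩ | ⟨h, -⟩ <;> rw [h]
  · rw [Real.exp_neg]
    field_simp
    linarith
  · rw [neg_neg]
    nlinarith [pow_pos hx 3]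

variable {h : ℂ → ℂ} {v t : ℂ} {C θ : ℝ}

lemma norm_pos_of_mem_sector (ht : t ∈ sector θ) : 0 < ‖t‖ := by
  obtain ⟨z, -, rfl⟩ := ht
  simp

lemma differentiableOn_cexp_mul_comp_cexp (hd : DifferentiableOn ℂ h (sector θ)) :
    DifferentiableOn ℂ (fun z ↦ cexp z * h (cexp z)) (Complex.im ⁻¹' uIcc 0 θ) :=
  Complex.differentiable_exp.differentiableOn.mul <|
    hd.comp Complex.differentiable_exp.differentiableOn (mapsTo_image _ _)

lemma isBigO_cexp_mul_comp_cexp (hC : ∀ t ∈ sector θ, ‖h t‖ ≤ C / (1 + ‖t‖ ^ 2)) :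
    (fun z ↦ cexp z * h (cexp z)) =O[stripEnds 0 θ] fun z ↦ rexp (-|z.re|) := by
  have hC₀ : 0 ≤ C := by
    have hone := (norm_nonneg _).trans (hC 1 ⟨0, by simp, Complex.exp_zero⟩)
    rw [norm_one] at hone
    linarith
  refine .of_bound C ?_
  filter_upwards [eventually_im_mem_stripEnds 0 θ] with z hz
  have hbound := hC _ (mem_image_of_mem cexp hz)
  rw [Complex.norm_exp] at hbound
  rw [norm_mul, Complex.norm_exp, norm_of_nonneg (exp_pos _).le]
  calc rexp z.re * ‖h (cexp z)‖ ≤ rexp z.re * (C / (1 + rexp z.re ^ 2)) := by gcongr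
    _ = C * (rexp z.re / (1 + rexp z.re ^ 2)) := by ring
    _ ≤ C * rexp (-|z.re|) := by gcongr; exact exp_mul_div_le_exp_neg_abs _

theorem integrableOn_Ioi_of_sector (hd : DifferentiableOn ℂ h (sector θ))
    (hC : ∀ t ∈ sector θ, ‖h t‖ ≤ C / (1 + ‖t‖ ^ 2)) :
    IntegrableOn (fun t : ℝ ↦ h t) (Ioi 0) := by
  have hcont := continuous_comp_add_mul_I
    (differentiableOn_cexp_mul_comp_cexp hd).continuousOn left_mem_uIcc
  rw [← integrable_exp_smul_comp_exp_iff]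
  simpa using integrable_of_isBigO_exp_neg hcont (isBigO_cexp_mul_comp_cexp hC) left_mem_uIcc

theorem integral_Ioi_mul_comp_mul (hv : v ≠ 0) (hd : DifferentiableOn ℂ h (sector v.arg))
    (hC : ∀ t ∈ sector v.arg, ‖h t‖ ≤ C / (1 + ‖t‖ ^ 2)) :
    ∫ t in Ioi (0 : ℝ), v * h (v * t) = ∫ t in Ioi (0 : ℝ), h t := by
  rw [← Complex.log_im] at hd hC
  have hshift := integral_comp_add_eq_integral (w := Complex.log v)
    (differentiableOn_cexp_mul_comp_cexp hd) (isBigO_cexp_mul_comp_cexp hC)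
  simp only [Complex.exp_add, Complex.exp_log hv] at hshift
  rw [← integral_exp_smul_comp_exp, ← integral_exp_smul_comp_exp]
  simpa [mul_comm v, mul_assoc] using hshift

end Rotation

/-! ### Mordell's identity -/

section Specialization

variable {q : ℕ} {t : ℂ}

/-- The Gaussian `exp (-4 * π * z² / q)`, which `exp (2 * π * I * t² / q)` becomes on the
ray `t = (1 + I) * z`. -/
noncomputable def gaussian (q : ℕ) (z : ℂ) : ℂ := cexp (-(4 * π / q) * z ^ 2)

/-- The period `(1 + I) / 2` of `exp (2 * π * t)` along the ray `t = (1 + I) * z`. -/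
noncomputable def period : ℂ := (1 + I) / 2

lemma period_im : period.im = 1 / 2 := by simp [period]

lemma period_sq : period ^ 2 = I / 2 := by
  rw [period]
  linear_combination Complex.I_sq / 4

lemma two_pi_I_div_period : 2 * π * I / period = 4 * π * period := by
  have h : (1 + I : ℂ) ≠ 0 := fun h ↦ by simpa using congr(($h).re)
  rw [period]
  field_simp
  linear_combination -4 * Complex.I_sq

lemma gaussian_add (z : ℂ) (hq : 0 < q) :
    gaussian q (z + q * period) = gaussian q z * cexp (-(8 * π * period * z)) := by
  have hq' : (q : ℂ) ≠ 0 := by exact_mod_cast hq.ne'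
  have hphase : -(4 * π / q : ℂ) * (z + q * period) ^ 2 =
      (-(4 * π / q) * z ^ 2 + -(8 * π * period * z)) - q * (2 * π * I) := by
    field_simp
    linear_combination (-4 * (q : ℂ) ^ 2) * period_sq
  rw [gaussian, hphase, Complex.exp_periodic.sub_nat_mul_eq, Complex.exp_add, gaussian]

lemma kernel_period (z : ℂ) : kernel period z = (cexp (4 * π * period * z) - 1)⁻¹ := by
  rw [kernel, mul_div_right_comm, two_pi_I_div_period]

lemma four_pi_div_re_pos (hq : 0 < q) : 0 < (4 * π / q : ℂ).re := by
  rw [show (4 * π / q : ℂ) = (4 * π / q : ℝ) by push_cast; rfl, Complex.ofReal_re]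
  have : (0 : ℝ) < q := Nat.cast_pos.2 hq
  positivity

lemma rapidlyDecreasing_gaussian (hq : 0 < q) : RapidlyDecreasing (gaussian q) := by
  have hG := rapidlyDecreasing_cexp_quadratic (four_pi_div_re_pos hq) 0
  simp only [zero_mul, add_zero] at hG
  exact hG

/-- The numerator `z * (z - q * p) * exp (-4 * π * z² / q)` of Mordell's contour integral,
where `p` is the period. -/
noncomputable def numerator (q : ℕ) (z : ℂ) : ℂ := z * (z - q * period) * gaussian q z

/-- The Gaussian `z * (z + q * p) * exp (-4 * π * z² / q - 4 * π * p * j * z)`, where `p` is the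
period. Those with `j = 1, 2` are the entire part of Mordell's identity. -/
noncomputable def entirePart (q j : ℕ) (z : ℂ) : ℂ :=
  z * (z + q * period) * cexp (-(4 * π / q) * z ^ 2 + -(4 * π * period * j) * z)

open Polynomial in
lemma rapidlyDecreasing_numerator (hq : 0 < q) : RapidlyDecreasing (numerator q) := by
  have hP := (rapidlyDecreasing_gaussian hq).polynomial_mul (X * (X - C (q * period)))
  simp only [eval_sub, eval_mul, eval_C, eval_X] at hP
  exact hP

open Polynomial in
lemma rapidlyDecreasing_entirePart (hq : 0 < q) (j : ℕ) : RapidlyDecreasing (entirePart q j) := by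
  have hP := (rapidlyDecreasing_cexp_quadratic (four_pi_div_re_pos hq)
    (-(4 * π * period * j))).polynomial_mul (X * (X + C (q * period)))
  simp only [eval_add, eval_mul, eval_C, eval_X] at hP
  exact hP

theorem numerator_sub_mul_kernel (hq : 0 < q) (hz : cexp (2 * π * I * z / period) ≠ 1) :
    (numerator q z - numerator q (z + q * period)) * kernel period z =
      -(2 * q * period) * (z * gaussian q z * kernel period z) +
        (entirePart q 1 z + entirePart q 2 z) := by
  have hexp (j : ℕ) : cexp (-(4 * π / q) * z ^ 2 + -(4 * π * period * j) * z) =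
      gaussian q z * (cexp (4 * π * period * z) ^ j)⁻¹ := by
    rw [← Complex.exp_nat_mul, ← Complex.exp_neg, gaussian, ← Complex.exp_add]
    ring_nf
  have hdouble : cexp (-(8 * π * period * z)) = (cexp (4 * π * period * z) ^ 2)⁻¹ := by
    rw [← Complex.exp_nat_mul, ← Complex.exp_neg]
    ring_nf
  rw [mul_div_right_comm, two_pi_I_div_period] at hz
  have hsub := sub_ne_zero.2 hz
  have hE := Complex.exp_ne_zero (4 * π * period * z)
  simp only [numerator, entirePart, hexp, gaussian_add z hq, hdouble, kernel_period]
  generalize cexp (4 * π * period * z) = E at *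
  field_simp
  ring

lemma numerator_nat_mul_period (q k : ℕ) :
    numerator q (k * period) = I / 2 * (k * (k - q) * cexp (-(2 * π * k ^ 2 / q) * I)) := by
  have hphase : -(4 * π / q : ℂ) * (k * period) ^ 2 = -(2 * π * k ^ 2 / q) * I := by
    linear_combination (-(4 * π / q : ℂ) * k ^ 2) * period_sq
  rw [numerator, gaussian, hphase]
  linear_combination (k * (k - q) * cexp (-(2 * π * k ^ 2 / q) * I)) * period_sq

theorem integral_entirePart (hq : 0 < q) (j : ℕ) :
    ∫ x : ℝ, entirePart q j x =
      √q / 2 * (q / (8 * π) + I * q ^ 2 * (j * (j - 2)) / 8) * cexp (π * q * j ^ 2 / 2 * I) := by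
  have hq' : (q : ℂ) ≠ 0 := by exact_mod_cast hq.ne'
  have hπ : (π : ℂ) ≠ 0 := Complex.ofReal_ne_zero.2 pi_ne_zero
  have hsqrt : (π / (4 * π / q : ℂ)) ^ (1 / 2 : ℂ) = √q / 2 := by
    rw [show (π / (4 * π / q) : ℂ) = (q / 4 : ℝ) by push_cast; field_simp,
      show (1 / 2 : ℂ) = (1 / 2 : ℝ) by push_cast; rfl, ← Complex.ofReal_cpow (by positivity),
      ← sqrt_eq_rpow, sqrt_div' _ (by norm_num), show (4 : ℝ) = 2 ^ 2 by norm_num,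
      sqrt_sq two_pos.le]
    push_cast
    rfl
  have hphase : (-(4 * π * period * j)) ^ 2 / (4 * (4 * π / q)) = π * q * j ^ 2 / 2 * I := by
    field_simp
    linear_combination 2 * (j : ℂ) ^ 2 * period_sq
  have hcoef : 1 / (2 * (4 * π / q)) + (-(4 * π * period * j)) ^ 2 / (4 * (4 * π / q) ^ 2) +
      q * period * (-(4 * π * period * j)) / (2 * (4 * π / q)) =
        q / (8 * π) + I * q ^ 2 * (j * (j - 2)) / 8 := by
    field_simp
    linear_combination 16 * π * q * j * (j - 2 : ℂ) * period_sq
  simp only [entirePart]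
  rw [integral_mul_add_mul_cexp_quadratic (four_pi_div_re_pos hq), hsqrt, hphase, hcoef]
  ring

theorem integral_id_mul_gaussian_mul_kernel (hq : 0 < q) :
    -(2 * q * period) * ∫ x : ℝ, x * gaussian q x * kernel period x =
      period * ∑ k ∈ Finset.range q, numerator q (k * period) -
        ((∫ x : ℝ, entirePart q 1 x) + ∫ x : ℝ, entirePart q 2 x) := by
  have hp : 0 < period.im := by norm_num [period_im]
  have hφ := (rapidlyDecreasing_gaussian hq).id_mul
  set ℓ : ℝ → ℂ := fun x ↦ x + (-(period.im / 2) : ℝ) * I with hℓ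
  have him (x : ℝ) : (ℓ x).im = -(1 / 4) := by norm_num [hℓ, period_im]
  have hpole (x : ℝ) : cexp (2 * π * I * ℓ x / period) ≠ 1 :=
    cexp_ne_one_of_abs_im_lt (by norm_num [him, period_im]) fun h ↦
      absurd (him x) (by norm_num [h])
  have hK : Integrable fun x ↦ ℓ x * gaussian q (ℓ x) * kernel period (ℓ x) :=
    hφ.integrable_mul_kernel_line hp (by linarith) left_mem_uIcc
  have h1 : Integrable fun x ↦ entirePart q 1 (ℓ x) :=
    (rapidlyDecreasing_entirePart hq 1).integrable _
  have h2 : Integrable fun x ↦ entirePart q 2 (ℓ x) :=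
    (rapidlyDecreasing_entirePart hq 2).integrable _
  have h12 : Integrable fun x ↦ entirePart q 1 (ℓ x) + entirePart q 2 (ℓ x) := h1.add h2
  have hsum : ∫ x : ℝ, (numerator q (ℓ x) - numerator q (ℓ x + q * period)) *
      kernel period (ℓ x) = period * ∑ k ∈ Finset.range q, numerator q (k * period) :=
    (rapidlyDecreasing_numerator hq).integral_sub_mul_kernel_eq_sum hp q
  simp_rw [numerator_sub_mul_kernel hq (hpole _)] at hsum
  rw [integral_add (hK.const_mul _) h12, integral_const_mul, integral_add h1 h2,
    (rapidlyDecreasing_entirePart hq 1).integral_comp_add,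
    (rapidlyDecreasing_entirePart hq 2).integral_comp_add,
    hφ.integral_mul_kernel_eq_line (by simp) hp] at hsum
  exact eq_sub_of_add_eq hsum

/-- The value of `∫ x in Ioi 0, cos (2 * π * x / q) / (exp (2 * π * √x) - 1)`. -/
noncomputable def closedForm (q : ℕ) : ℝ :=
  √q / 16 * ((1 + cos (π * q / 2) - sin (π * q / 2)) / π +
    q * (cos (π * q / 2) + sin (π * q / 2))) -
      (∑ k ∈ Finset.range q, k * (q - k) * cos (2 * π * k ^ 2 / q)) / (2 * q)

theorem integral_Ioi_id_mul_gaussian_mul_kernel (hq : 0 < q) :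
    4 * I * ∫ x in Ioi (0 : ℝ), x * gaussian q x * kernel period x =
      (1 + I) / q * ((∫ x : ℝ, entirePart q 1 x) + ∫ x : ℝ, entirePart q 2 x) -
        I / q * ∑ k ∈ Finset.range q, numerator q (k * period) - q / (4 * π) * I := by
  have hq' : (q : ℂ) ≠ 0 := by exact_mod_cast hq.ne'
  have hπ : (π : ℂ) ≠ 0 := Complex.ofReal_ne_zero.2 pi_ne_zero
  have hodd := (rapidlyDecreasing_gaussian hq).id_mul.integral_mul_kernel_of_odd
    (fun z ↦ by simp [gaussian]) (show 0 < period.im by norm_num [period_im])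
  have hgauss : ∫ x in Ioi (0 : ℝ), x * gaussian q x = q / (8 * π) := by
    simp only [gaussian]
    rw [integral_mul_cexp_neg_mul_sq (four_pi_div_re_pos hq)]
    field_simp
    norm_num
  have hline := integral_id_mul_gaussian_mul_kernel hq
  rw [hodd, hgauss] at hline
  have hperiod : period * (1 + I) = I := by
    rw [period]
    linear_combination Complex.I_sq / 2
  generalize (∫ x in Ioi (0 : ℝ), x * gaussian q x * kernel period x) = J,
    (∫ x : ℝ, entirePart q 1 x) + (∫ x : ℝ, entirePart q 2 x) = W,
    ∑ k ∈ Finset.range q, numerator q (k * period) = S at hline ⊢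
  have hrotated : -(2 * q * I) * (2 * J + q / (8 * π)) = I * S - (1 + I) * W := by
    linear_combination (1 + I) * hline + (S + 2 * q * (2 * J + q / (8 * π))) * hperiod
  field_simp at hrotated ⊢
  linear_combination -hrotated / 2

lemma closedForm_five : closedForm 5 = (8 - 3 * √5) / 16 := by
  have hcos : cos (π * 5 / 2) = 0 := by
    rw [show π * 5 / 2 = π / 2 + 2 * π by ring, cos_add_two_pi, cos_pi_div_two]
  have hsin : sin (π * 5 / 2) = 1 := by
    rw [show π * 5 / 2 = π / 2 + 2 * π by ring, sin_add_two_pi, sin_pi_div_two]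
  have hcos₁ : cos (2 * π / 5) = (√5 - 1) / 4 := by
    rw [mul_div_assoc, cos_two_mul, cos_pi_div_five]
    linear_combination sq_sqrt (show (0 : ℝ) ≤ 5 by norm_num) / 8
  have hcos₂ : cos (2 * π * 2 ^ 2 / 5) = cos (2 * π / 5) := by
    rw [← cos_two_pi_sub]
    ring_nf
  have hcos₃ : cos (2 * π * 3 ^ 2 / 5) = cos (2 * π / 5) := by
    rw [← cos_nat_mul_two_pi_sub (2 * π / 5) 2]
    ring_nf
  have hcos₄ : cos (2 * π * 4 ^ 2 / 5) = cos (2 * π / 5) := by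
    rw [← cos_add_nat_mul_two_pi (2 * π / 5) 3]
    ring_nf
  rw [closedForm]
  simp only [Finset.sum_range_succ, Finset.sum_range_zero]
  push_cast
  rw [hcos, hsin, one_pow, mul_one, hcos₂, hcos₃, hcos₄, hcos₁]
  ring

lemma integral_entirePart_one (hq : 0 < q) :
    ∫ x : ℝ, entirePart q 1 x =
      √q / 2 * (q / (8 * π) - q ^ 2 / 8 * I) *
        ((cos (π * q / 2) : ℝ) + (sin (π * q / 2) : ℝ) * I) := by
  rw [integral_entirePart hq, Complex.exp_mul_I]
  push_cast
  ring_nf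

lemma integral_entirePart_two (hq : 0 < q) :
    ∫ x : ℝ, entirePart q 2 x = √q / 2 * (q / (8 * π)) := by
  have hphase : π * q * (2 : ℕ) ^ 2 / 2 * I = q * (2 * π * I) := by
    push_cast
    ring
  rw [integral_entirePart hq, hphase, Complex.exp_nat_mul_two_pi_mul_I]
  push_cast
  ring

lemma sum_numerator (q : ℕ) :
    ∑ k ∈ Finset.range q, numerator q (k * period) =
      -(I / 2) * ((∑ k ∈ Finset.range q, k * (q - k) * cos (2 * π * k ^ 2 / q) : ℝ) -
        (∑ k ∈ Finset.range q, k * (q - k) * sin (2 * π * k ^ 2 / q) : ℝ) * I) := by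
  push_cast
  rw [Finset.sum_mul, ← Finset.sum_sub_distrib, Finset.mul_sum]
  refine Finset.sum_congr rfl fun k _ ↦ ?_
  rw [numerator_nat_mul_period, Complex.exp_mul_I, Complex.cos_neg, Complex.sin_neg]
  ring

theorem re_integral_Ioi_id_mul_gaussian_mul_kernel (hq : 0 < q) :
    (4 * I * ∫ x in Ioi (0 : ℝ), x * gaussian q x * kernel period x).re = closedForm q := by
  have hq' : (q : ℂ) ≠ 0 := by exact_mod_cast hq.ne'
  have hπ : (π : ℂ) ≠ 0 := Complex.ofReal_ne_zero.2 pi_ne_zero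
  rw [integral_Ioi_id_mul_gaussian_mul_kernel hq, integral_entirePart_one hq,
    integral_entirePart_two hq, sum_numerator, closedForm]
  generalize cos (π * q / 2) = c, sin (π * q / 2) = s,
    ∑ k ∈ Finset.range q, k * (q - k) * cos (2 * π * k ^ 2 / q) = C,
    ∑ k ∈ Finset.range q, k * (q - k) * sin (2 * π * k ^ 2 / q) = S
  have hparts : (1 + I) / q * (√q / 2 * (q / (8 * π) - q ^ 2 / 8 * I) * (c + s * I) +
        √q / 2 * (q / (8 * π))) - I / q * (-(I / 2) * (C - S * I)) - q / (4 * π) * I =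
      (√q / 16 * ((1 + c - s) / π + q * (c + s)) - C / (2 * q) : ℝ) +
        (√q / 16 * ((1 + c + s) / π + q * (s - c)) + S / (2 * q) - q / (4 * π) : ℝ) * I := by
    linear_combination (norm := (push_cast; field_simp; ring))
      (√q / (2 * q) * (q / (8 * π) * s - q ^ 2 / 8 * (c + s + s * I)) + (C - S * I) / (2 * q)) *
        Complex.I_sq
  rw [hparts, Complex.add_re, Complex.ofReal_re, Complex.re_ofReal_mul, Complex.I_re, mul_zero,
    add_zero]

/-! ### The integrand in the sector -/

lemma arg_one_add_I : (1 + I).arg = π / 4 := by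
  have hpolar : (1 + I : ℂ) = √2 * (Complex.cos (π / 4 : ℝ) + Complex.sin (π / 4 : ℝ) * I) := by
    have : (√2 : ℂ) * √2 = 2 := by exact_mod_cast mul_self_sqrt zero_le_two
    rw [← Complex.ofReal_cos, ← Complex.ofReal_sin, cos_pi_div_four, sin_pi_div_four]
    push_cast
    linear_combination -(1 + I) / 2 * this
  rw [hpolar, Complex.arg_mul_cos_add_sin_mul_I (by positivity)
    ⟨by linarith [pi_pos], by linarith [pi_pos]⟩]

lemma re_pos_and_im_le_re_of_mem_sector (ht : t ∈ sector (π / 4)) :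
    0 < t.re ∧ 0 ≤ t.im ∧ t.im ≤ t.re := by
  obtain ⟨z, hz, rfl⟩ := ht
  rw [mem_preimage, uIcc_of_le (by positivity)] at hz
  obtain ⟨h0, h1⟩ := hz
  have hcos : cos (π / 4) ≤ cos z.im := cos_le_cos_of_nonneg_of_le_pi h0 (by linarith [pi_pos]) h1
  have hsin : sin z.im ≤ sin (π / 4) :=
    sin_le_sin_of_le_of_le_pi_div_two (by linarith [pi_pos]) (by linarith [pi_pos]) h1
  have hpos : 0 < cos (π / 4) := cos_pos_of_mem_Ioo ⟨by linarith [pi_pos], by linarith [pi_pos]⟩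
  have heq : sin (π / 4) = cos (π / 4) := by rw [sin_pi_div_four, cos_pi_div_four]
  rw [Complex.exp_re, Complex.exp_im]
  refine ⟨mul_pos (exp_pos _) (hpos.trans_le hcos), mul_nonneg (exp_pos _).le
    (sin_nonneg_of_nonneg_of_le_pi h0 (by linarith [pi_pos])), ?_⟩
  gcongr
  linarith

/-- The complex form `2 * t * exp (2 * π * I * t² / q) / (exp (2 * π * t) - 1)` of the integrand,
after the substitution `x = t²`. -/
noncomputable def integrand (q : ℕ) (t : ℂ) : ℂ :=
  2 * t * cexp (2 * π * I * t ^ 2 / q) / (cexp (2 * π * t) - 1)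

lemma add_cube_div_six_le_exp_sub_one {r : ℝ} (hr : 0 ≤ r) : r + r ^ 3 / 6 ≤ rexp r - 1 := by
  have hseries := Real.sum_le_exp_of_nonneg hr 4
  norm_num [Finset.sum_range_succ, Nat.factorial] at hseries
  nlinarith [sq_nonneg r]

lemma add_cube_div_six_le_norm_cexp_sub_one (ht : t ∈ sector (π / 4)) :
    ‖t‖ + ‖t‖ ^ 3 / 6 ≤ ‖cexp (2 * π * t) - 1‖ := by
  obtain ⟨hre, him, hle⟩ := re_pos_and_im_le_re_of_mem_sector ht
  have hnorm : ‖t‖ ≤ 2 * π * t.re := by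
    have := Complex.norm_le_abs_re_add_abs_im t
    rw [abs_of_pos hre, abs_of_nonneg him] at this
    nlinarith [pi_gt_three]
  calc ‖t‖ + ‖t‖ ^ 3 / 6 ≤ rexp ‖t‖ - 1 := add_cube_div_six_le_exp_sub_one (norm_nonneg t)
    _ ≤ rexp (2 * π * t.re) - 1 := by gcongr
    _ = ‖cexp (2 * π * t)‖ - ‖(1 : ℂ)‖ := by simp [Complex.norm_exp]
    _ ≤ ‖cexp (2 * π * t) - 1‖ := norm_sub_norm_le _ _

lemma norm_cexp_mul_sq_le_one (q : ℕ) (ht : t ∈ sector (π / 4)) :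
    ‖cexp (2 * π * I * t ^ 2 / q)‖ ≤ 1 := by
  obtain ⟨hre, him, -⟩ := re_pos_and_im_le_re_of_mem_sector ht
  have hphase : (2 * π * I * t ^ 2 / q).re = -(4 * π * (t.re * t.im) / q) := by
    simp only [pow_two, Complex.div_natCast_re, Complex.mul_re, Complex.mul_im, Complex.re_ofNat,
      Complex.im_ofNat, Complex.ofReal_re, Complex.ofReal_im, Complex.I_re, Complex.I_im, mul_zero,
      zero_mul, mul_one, sub_zero, zero_sub, add_zero, sub_self]
    ring
  rw [Complex.norm_exp, hphase, exp_le_one_iff, neg_nonpos]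
  positivity

lemma differentiableOn_integrand (q : ℕ) : DifferentiableOn ℂ (integrand q) (sector (π / 4)) := by
  intro t ht
  have hpos := norm_pos_of_mem_sector ht
  have hne : cexp (2 * π * t) - 1 ≠ 0 :=
    norm_pos_iff.1 ((by positivity : 0 < ‖t‖ + ‖t‖ ^ 3 / 6).trans_le
      (add_cube_div_six_le_norm_cexp_sub_one ht))
  refine DifferentiableAt.differentiableWithinAt ?_
  unfold integrand
  exact DifferentiableAt.div (by fun_prop) (by fun_prop) hne

lemma norm_integrand_le (q : ℕ) (ht : t ∈ sector (π / 4)) :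
    ‖integrand q t‖ ≤ 12 / (1 + ‖t‖ ^ 2) := by
  have hpos := norm_pos_of_mem_sector ht
  calc ‖integrand q t‖ =
        2 * ‖t‖ * ‖cexp (2 * π * I * t ^ 2 / q)‖ / ‖cexp (2 * π * t) - 1‖ := by
        simp [integrand]
    _ ≤ 2 * ‖t‖ * 1 / (‖t‖ + ‖t‖ ^ 3 / 6) := by
        gcongr
        exacts [norm_cexp_mul_sq_le_one q ht, add_cube_div_six_le_norm_cexp_sub_one ht]
    _ ≤ 12 / (1 + ‖t‖ ^ 2) := by
        rw [div_le_div_iff₀ (by positivity) (by positivity)]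
        nlinarith

lemma one_add_I_mul_integrand (q : ℕ) (z : ℂ) :
    (1 + I) * integrand q ((1 + I) * z) = 4 * I * (z * gaussian q z * kernel period z) := by
  have hsq : (1 + I) ^ 2 = 2 * I := by linear_combination Complex.I_sq
  have hphase : 2 * π * I * ((1 + I) * z) ^ 2 / q = -(4 * π / q) * z ^ 2 := by
    rw [mul_pow, hsq]
    linear_combination 4 * π * z ^ 2 / q * Complex.I_sq
  have hexp : 2 * π * ((1 + I) * z) = 4 * π * period * z := by
    rw [period]
    ring
  rw [integrand, hphase, hexp, kernel_period, gaussian, div_eq_mul_inv]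
  linear_combination 2 * z * cexp (-(4 * π / q) * z ^ 2) * (cexp (4 * π * period * z) - 1)⁻¹ * hsq

lemma integrableOn_integrand (q : ℕ) : IntegrableOn (fun t : ℝ ↦ integrand q t) (Ioi 0) :=
  integrableOn_Ioi_of_sector (differentiableOn_integrand q) fun _ ↦ norm_integrand_le q

theorem integral_integrand (q : ℕ) :
    ∫ t in Ioi (0 : ℝ), integrand q t =
      4 * I * ∫ x in Ioi (0 : ℝ), x * gaussian q x * kernel period x := by
  have hv : (1 + I : ℂ) ≠ 0 := fun h ↦ by simpa using congr(($h).re)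
  have hrotate := integral_Ioi_mul_comp_mul (h := integrand q) (C := 12) hv
  rw [arg_one_add_I] at hrotate
  rw [← hrotate (differentiableOn_integrand q) fun _ ↦ norm_integrand_le q]
  simp only [one_add_I_mul_integrand, integral_const_mul]

lemma re_integrand_ofReal (q : ℕ) (t : ℝ) :
    (integrand q t).re =
      2 * t * (cos (2 * π * t ^ 2 / q) / (rexp (2 * π * t) - 1)) := by
  have hreal : integrand q t = (2 * t / (rexp (2 * π * t) - 1) : ℝ) *
      cexp ((2 * π * t ^ 2 / q : ℝ) * I) := by
    rw [integrand]
    push_cast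
    ring_nf
  rw [hreal, Complex.re_ofReal_mul, Complex.exp_ofReal_mul_I_re]
  ring

lemma re_integrand_eq_smul (q : ℕ) {t : ℝ} (ht : 0 < t) :
    (integrand q t).re = (2 * t ^ (2 - 1 : ℝ)) •
      (cos (2 * π * t ^ (2 : ℝ) / q) / (rexp (2 * π * √(t ^ (2 : ℝ))) - 1)) := by
  rw [re_integrand_ofReal, rpow_two, sqrt_sq ht.le, smul_eq_mul]
  norm_num

end Specialization

end RamanujanIntegral

open RamanujanIntegral in
theorem ramanujan_RC_zero_twoFifths_general {q : ℕ} (hq : 0 < q) :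
    IntegrableOn (fun x : ℝ ↦ cos (2 * π * x / q) / (rexp (2 * π * √x) - 1)) (Ioi 0) ∧
    ∫ x in Ioi (0 : ℝ), cos (2 * π * x / q) / (rexp (2 * π * √x) - 1) = closedForm q := by
  have hint := integrableOn_integrand q
  have hsubst : EqOn (fun t : ℝ ↦ (integrand q t).re) _ (Ioi 0) := fun t ht ↦
    re_integrand_eq_smul q ht
  constructor
  · rw [← integrableOn_Ioi_comp_rpow_iff _ two_ne_zero, abs_two]
    exact (integrableOn_congr_fun hsubst measurableSet_Ioi).1 hint.re
  · rw [← integral_comp_rpow_Ioi_of_pos two_pos, ← setIntegral_congr_fun measurableSet_Ioi hsubst,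
      ← re_integral_Ioi_id_mul_gaussian_mul_kernel hq, ← integral_integrand]
    exact integral_re hint

/-- Ramanujan's integral `R_C(0, 2/5)` converges and equals `(8 - 3√5)/16`. -/
theorem ramanujan_RC_zero_twoFifths :
    IntegrableOn
      (fun x : ℝ => Real.cos (2 * π * x / 5) / (Real.exp (2 * π * Real.sqrt x) - 1)) (Ioi 0) ∧
    (∫ x in Ioi (0:ℝ), Real.cos (2 * π * x / 5) / (Real.exp (2 * π * Real.sqrt x) - 1)) =
      (8 - 3 * Real.sqrt 5) / 16 := by
  simpa [RamanujanIntegral.closedForm_five] using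
    ramanujan_RC_zero_twoFifths_general (show 0 < 5 by norm_num)
end

section
/- For every positive real number n, R_C(0,n) = (1/n)·√(2/n)·Υ(1/n) − Υ(n), where Υ(n) = 1/(2πn) + ∫_0^∞ sin(πnx)/(exp(2π√x) − 1) dx and R_C(0,n) = ∫_0^∞ cos(πnx)/(exp(2π√x) − 1) dx. -/
open MeasureTheory Real Set

/-!
The weight `1 / (e^{2πu} - 1)` is its own sine transform up to elementary terms: expanding it in a
geometric series turns the transform into the partial fraction series of the cotangent. Likewise
`x e^{-πsx²}` is its own sine transform up to a factor and the substitution `s ↦ 1/s`. Pairing the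
two by Parseval and substituting `x ↦ x²` relates the Laplace transform of `1 / (e^{2π√x} - 1)` at
`s` to the one at `1/s`, first for `Re s > 0` and then, by continuity, on the imaginary axis. There
the real part of the transform is the cosine integral and the imaginary part the sine integral. At
`s = -in` the factor `s^{-3/2}` is a positive multiple of `i - 1`, so adding real and imaginary
parts eliminates the cosine integral at `1/n`.
-/

/-- The Bose–Einstein weight `1 / (e^{2πu} - 1)`, nearly self-reciprocal under the sine transform.
Its junk value `0` at `u = 0` is invisible to the integrals over `(0, ∞)`. -/
noncomputable def boseKernel (u : ℝ) : ℝ := (Real.exp (2 * π * u) - 1)⁻¹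

lemma one_lt_exp_two_pi_mul {u : ℝ} (hu : 0 < u) : 1 < Real.exp (2 * π * u) :=
  Real.one_lt_exp_iff.mpr (by positivity)

lemma boseKernel_nonneg {u : ℝ} (hu : 0 ≤ u) : 0 ≤ boseKernel u :=
  inv_nonneg.mpr (sub_nonneg.mpr (Real.one_le_exp (by positivity)))

@[fun_prop]
lemma measurable_boseKernel : Measurable boseKernel := by
  unfold boseKernel
  fun_prop

lemma mul_boseKernel_le_exp {u : ℝ} (hu : 0 < u) : u * boseKernel u ≤ Real.exp (-π * u) := by
  have hsinh : π * u ≤ (Real.exp (π * u) - Real.exp (-(π * u))) / 2 := by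
    rw [← Real.sinh_eq]
    exact Real.self_le_sinh_iff.mpr (by positivity)
  have hfactor : Real.exp (-π * u) * (Real.exp (2 * π * u) - 1) =
      Real.exp (π * u) - Real.exp (-(π * u)) := by
    rw [mul_sub, ← Real.exp_add]
    ring_nf
  rw [boseKernel, ← div_eq_mul_inv, div_le_iff₀ (sub_pos.mpr (one_lt_exp_two_pi_mul hu)), hfactor]
  nlinarith [Real.pi_gt_three]

lemma integrableOn_mul_boseKernel : IntegrableOn (fun u ↦ u * boseKernel u) (Ioi 0) := by
  refine Integrable.mono' (integrableOn_exp_mul_Ioi (neg_lt_zero.mpr Real.pi_pos) 0)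
    (by fun_prop) ?_
  filter_upwards [ae_restrict_mem measurableSet_Ioi] with u (hu : 0 < u)
  rw [Real.norm_of_nonneg (mul_nonneg hu.le (boseKernel_nonneg hu.le))]
  exact mul_boseKernel_le_exp hu

lemma integrableOn_mul_boseKernel_ofReal :
    IntegrableOn (fun u : ℝ ↦ (u * boseKernel u : ℂ)) (Ioi 0) := by
  exact_mod_cast integrableOn_mul_boseKernel.ofReal (𝕜 := ℂ)

lemma integrableOn_boseKernel_sqrt : IntegrableOn (fun x ↦ boseKernel √x) (Ioi 0) := by
  rw [← integrableOn_Ioi_comp_rpow_iff' _ two_ne_zero]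
  refine integrableOn_mul_boseKernel.congr_fun (fun u (hu : 0 < u) ↦ ?_) measurableSet_Ioi
  norm_num [Real.sqrt_sq hu.le]

lemma integrableOn_sin_mul_boseKernel (t : ℝ) :
    IntegrableOn (fun u ↦ Real.sin (t * u) * boseKernel u) (Ioi 0) := by
  refine (integrableOn_mul_boseKernel.const_mul |t|).mono' (by fun_prop) ?_
  filter_upwards [ae_restrict_mem measurableSet_Ioi] with u (hu : 0 < u)
  rw [norm_mul, Real.norm_of_nonneg (boseKernel_nonneg hu.le), ← mul_assoc]
  gcongr
  · exact boseKernel_nonneg hu.le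
  · simpa [abs_mul, abs_of_pos hu] using Real.abs_sin_le_abs (x := t * u)

lemma hasSum_exp_boseKernel {u : ℝ} (hu : 0 < u) :
    HasSum (fun k : ℕ ↦ Real.exp (-(2 * π * (k + 1) * u))) (boseKernel u) := by
  have hE := one_lt_exp_two_pi_mul hu
  have hgeom := (hasSum_geometric_of_lt_one (inv_nonneg.mpr (Real.exp_pos _).le)
    (inv_lt_one_of_one_lt₀ hE)).mul_left (Real.exp (2 * π * u))⁻¹
  convert! hgeom using 1
  · funext k
    rw [← pow_succ', ← Real.exp_neg, ← Real.exp_nat_mul]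
    push_cast
    ring_nf
  · have : Real.exp (2 * π * u) - 1 ≠ 0 := by linarith
    rw [boseKernel]
    field_simp

lemma hasSum_integral_sin_mul_exp (t : ℝ) :
    HasSum (fun k : ℕ ↦
        ∫ u in Ioi (0 : ℝ), Real.sin (t * u) * Real.exp (-(2 * π * (k + 1) * u)))
      (∫ u in Ioi (0 : ℝ), Real.sin (t * u) * boseKernel u) := by
  have hsum : ∀ᵐ u ∂volume.restrict (Ioi (0 : ℝ)),
      HasSum (fun k : ℕ ↦ Real.exp (-(2 * π * (k + 1) * u))) (boseKernel u) := by
    filter_upwards [ae_restrict_mem measurableSet_Ioi] with u hu using hasSum_exp_boseKernel hu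
  have hnorm : ∀ᵐ u ∂volume.restrict (Ioi (0 : ℝ)),
      HasSum (fun k : ℕ ↦ ‖Real.sin (t * u) * Real.exp (-(2 * π * (k + 1) * u))‖)
        ‖Real.sin (t * u) * boseKernel u‖ := by
    filter_upwards [hsum, ae_restrict_mem measurableSet_Ioi] with u hsum (hu : 0 < u)
    simpa [abs_mul, abs_of_nonneg (boseKernel_nonneg hu.le)] using hsum.mul_left |Real.sin (t * u)|
  exact hasSum_integral_of_dominated_convergence
    (fun k u ↦ ‖Real.sin (t * u) * Real.exp (-(2 * π * (k + 1) * u))‖)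
    (fun k ↦ by fun_prop) (fun k ↦ ae_of_all _ fun u ↦ le_rfl)
    (hnorm.mono fun u hu ↦ hu.summable)
    ((integrableOn_sin_mul_boseKernel t).norm.congr (hnorm.mono fun u hu ↦ hu.tsum_eq.symm))
    (hsum.mono fun u hu ↦ hu.mul_left _)

lemma integral_sin_mul_exp_neg_Ioi {a : ℝ} (ha : 0 < a) (b : ℝ) :
    ∫ u in Ioi (0 : ℝ), Real.sin (b * u) * Real.exp (-(a * u)) = b / (a ^ 2 + b ^ 2) := by
  have hre : (-a + b * Complex.I : ℂ).re < 0 := by simpa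
  have him (u : ℝ) : Real.sin (b * u) * Real.exp (-(a * u)) =
      (Complex.exp ((-a + b * Complex.I) * u)).im := by
    simp [Complex.exp_im, mul_comm]
  simp_rw [him]
  refine (integral_im (integrableOn_exp_mul_complex_Ioi hre 0)).trans ?_
  rw [integral_exp_mul_complex_Ioi hre]
  simp [Complex.normSq_apply, sq, neg_div]

lemma cot_pi_mul_neg_mul_I {x : ℝ} (hx : x ≠ 0) :
    Complex.cot (π * -(x * Complex.I)) = Complex.I * (1 + 2 * boseKernel x) := by
  have hE : (Real.exp (2 * π * x) : ℂ) - 1 ≠ 0 := by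
    rw [sub_ne_zero]
    exact_mod_cast (Real.exp_eq_one_iff _).not.mpr (by simp [hx, Real.pi_ne_zero])
  have hE' : 1 - (Real.exp (2 * π * x) : ℂ) ≠ 0 := by rwa [← neg_sub, neg_ne_zero]
  rw [Complex.cot_pi_eq_exp_ratio, boseKernel,
    show 2 * π * Complex.I * -(x * Complex.I) = ((2 * π * x : ℝ) : ℂ) by
      push_cast; linear_combination (-2 * π * x : ℂ) * Complex.I_sq, ← Complex.ofReal_exp]
  push_cast at hE hE' ⊢
  field_simp
  rw [Complex.I_sq]
  ring

lemma tsum_div_sq_add_sq {x : ℝ} (hx : x ≠ 0) :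
    ∑' k : ℕ, x / (x ^ 2 + (k + 1) ^ 2) = π / 2 * (1 + 2 * boseKernel x) - 1 / (2 * x) := by
  have hz (m : ℤ) : (-(x * Complex.I) : ℂ) + m ≠ 0 := fun h ↦ hx <| by
    simpa using congrArg Complex.im h
  have hmem : (-(x * Complex.I) : ℂ) ∈ Complex.integerComplement := by
    rintro ⟨m, hm⟩
    exact hz (-m) (by simp [← hm])
  have hterm (k : ℕ) : (1 / (-(x * Complex.I) - (k + 1)) + 1 / (-(x * Complex.I) + (k + 1)) : ℂ) =
      2 * Complex.I * ((x / (x ^ 2 + (k + 1) ^ 2) : ℝ) : ℂ) := by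
    have hminus : (-(x * Complex.I) - (k + 1) : ℂ) ≠ 0 := by
      simpa [sub_eq_add_neg, add_comm] using hz (-(k + 1))
    have hplus : (-(x * Complex.I) + (k + 1) : ℂ) ≠ 0 := by simpa using hz (k + 1)
    have hsq : (x ^ 2 + (k + 1) ^ 2 : ℂ) ≠ 0 := by
      exact_mod_cast (by positivity : (x ^ 2 + (k + 1) ^ 2 : ℝ) ≠ 0)
    push_cast
    rw [div_add_div _ _ hminus hplus, mul_div_assoc', div_eq_div_iff (mul_ne_zero hminus hplus) hsq]
    linear_combination (-2 * x ^ 3 * Complex.I : ℂ) * Complex.I_sq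
  have hcot := cot_series_rep' hmem
  simp_rw [hterm] at hcot
  rw [tsum_mul_left, ← Complex.ofReal_tsum, cot_pi_mul_neg_mul_I hx] at hcot
  have hxc : (x : ℂ) ≠ 0 := by exact_mod_cast hx
  apply Complex.ofReal_injective
  push_cast at hcot ⊢
  have h2I : (2 * Complex.I : ℂ) ≠ 0 := by simp
  refine mul_left_cancel₀ h2I (hcot.symm.trans ?_)
  field_simp
  rw [Complex.I_sq]
  ring

lemma integral_sin_mul_boseKernel {x : ℝ} (hx : x ≠ 0) :
    ∫ u in Ioi (0 : ℝ), Real.sin (2 * π * x * u) * boseKernel u =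
      boseKernel x / 2 + 1 / 4 - 1 / (4 * π * x) := by
  have hterm (k : ℕ) :
      ∫ u in Ioi (0 : ℝ), Real.sin (2 * π * x * u) * Real.exp (-(2 * π * (k + 1) * u)) =
        1 / (2 * π) * (x / (x ^ 2 + (k + 1) ^ 2)) := by
    rw [integral_sin_mul_exp_neg_Ioi (by positivity)]
    have : 0 < x ^ 2 + (k + 1) ^ 2 := by positivity
    field_simp
    ring
  rw [← (hasSum_integral_sin_mul_exp _).tsum_eq]
  simp_rw [hterm]
  rw [tsum_mul_left, tsum_div_sq_add_sq hx]
  field_simp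
  ring

lemma integral_eq_two_smul_integral_Ioi_of_even {E : Type*} [NormedAddCommGroup E]
    [NormedSpace ℝ E] {f : ℝ → E} (hf : Integrable f) (heven : Function.Even f) :
    ∫ x, f x = (2 : ℝ) • ∫ x in Ioi (0 : ℝ), f x := by
  have hneg : ∫ x in Iic (0 : ℝ), f x = ∫ x in Ioi (0 : ℝ), f x := by
    simpa [heven _] using (integral_comp_neg_Ioi (0 : ℝ) f).symm
  rw [← intervalIntegral.integral_Iic_add_Ioi hf.integrableOn hf.integrableOn, hneg, two_smul]

section Gaussian

variable {b : ℂ} (hb : 0 < b.re) (t : ℝ)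
include hb

lemma integral_cos_mul_cexp_neg_mul_sq :
    ∫ x : ℝ, (Real.cos (t * x) : ℂ) * Complex.exp (-b * x ^ 2) =
      (π / b) ^ (1 / 2 : ℂ) * Complex.exp (-t ^ 2 / (4 * b)) := by
  have hint (c : ℝ) :
      Integrable fun x : ℝ ↦ Complex.exp (Complex.I * c * x) * Complex.exp (-b * x ^ 2) := by
    refine (integrable_cexp_neg_mul_sq hb).bdd_mul (c := 1) (by fun_prop) (ae_of_all _ fun x ↦ ?_)
    simp [Complex.norm_exp]
  have hcos (x : ℝ) : (Real.cos (t * x) : ℂ) * Complex.exp (-b * x ^ 2) =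
      2⁻¹ * (Complex.exp (Complex.I * t * x) * Complex.exp (-b * x ^ 2) +
        Complex.exp (Complex.I * (-t : ℝ) * x) * Complex.exp (-b * x ^ 2)) := by
    push_cast
    rw [Complex.cos]
    ring_nf
  simp_rw [hcos]
  rw [integral_const_mul, integral_add (hint t) (hint (-t)), fourierIntegral_gaussian hb,
    fourierIntegral_gaussian hb]
  push_cast
  ring_nf

lemma integral_mul_sin_mul_cexp_neg_mul_sq :
    ∫ x in Ioi (0 : ℝ), (x : ℂ) * Real.sin (t * x) * Complex.exp (-b * x ^ 2) =
      t / (4 * b) * ((π / b) ^ (1 / 2 : ℂ) * Complex.exp (-t ^ 2 / (4 * b))) := by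
  have hb0 : b ≠ 0 := by rintro rfl; simp at hb
  have hbdd {φ : ℝ → ℝ} (hφ : ∀ y, |φ y| ≤ 1) : ∀ᵐ x : ℝ, ‖(φ (t * x) : ℂ)‖ ≤ 1 :=
    ae_of_all _ fun x ↦ by simpa using hφ (t * x)
  have hsin := (integrable_cexp_neg_mul_sq hb).bdd_mul (by fun_prop) (hbdd Real.abs_sin_le_one)
  have hcos := (integrable_cexp_neg_mul_sq hb).bdd_mul (by fun_prop) (hbdd Real.abs_cos_le_one)
  have hxsin : Integrable fun x : ℝ ↦ (x : ℂ) * Real.sin (t * x) * Complex.exp (-b * x ^ 2) :=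
    ((integrable_mul_cexp_neg_mul_sq hb).bdd_mul (by fun_prop)
      (hbdd Real.abs_sin_le_one)).congr (ae_of_all _ fun x ↦ by ring)
  have hderiv (x : ℝ) :
      HasDerivAt (fun x : ℝ ↦ (Real.sin (t * x) : ℂ) * Complex.exp (-b * x ^ 2))
        (t * (Real.cos (t * x) * Complex.exp (-b * x ^ 2)) -
          2 * b * (x * Real.sin (t * x) * Complex.exp (-b * x ^ 2))) x := by
    have hs := ((hasDerivAt_id x).const_mul t).sin.ofReal_comp
    have he := (((hasDerivAt_pow 2 (x : ℂ)).const_mul (-b)).cexp).comp_ofReal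
    convert! hs.mul he using 1
    simp only [Complex.ofReal_cos, Complex.ofReal_mul, Complex.ofReal_sin, id_eq]
    push_cast
    ring
  have hparts := integral_eq_zero_of_hasDerivAt_of_integrable hderiv
    ((hcos.const_mul _).sub (hxsin.const_mul _)) hsin
  rw [integral_sub (hcos.const_mul _) (hxsin.const_mul _), integral_const_mul, integral_const_mul,
    integral_cos_mul_cexp_neg_mul_sq hb, integral_eq_two_smul_integral_Ioi_of_even hxsin
      (fun x ↦ by simp), Complex.real_smul, Complex.ofReal_ofNat] at hparts
  have h2b : 2 * b * 2 ≠ 0 := by simpa using hb0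
  refine mul_left_cancel₀ h2b ?_
  rw [mul_assoc (2 * b), ← sub_eq_zero.mp hparts]
  field_simp
  ring

end Gaussian

lemma integrable_sq_mul_cexp_neg_mul_sq {b : ℂ} (hb : 0 < b.re) :
    Integrable fun x : ℝ ↦ (x : ℂ) ^ 2 * Complex.exp (-b * x ^ 2) := by
  refine (integrable_rpow_mul_exp_neg_mul_sq hb (s := 2) (by norm_num)).mono' (by fun_prop)
    (ae_of_all _ fun x ↦ ?_)
  rw [norm_mul, norm_cexp_neg_mul_sq]
  simp

lemma integrable_gaussian_mul_sin_mul {s : ℂ} (hs : 0 < s.re) {h : ℝ → ℂ}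
    (hh : IntegrableOn (fun u : ℝ ↦ u * h u) (Ioi 0)) :
    Integrable (Function.uncurry fun x u : ℝ ↦
        x * Complex.exp (-(π * s) * x ^ 2) * (Real.sin (2 * π * x * u) * h u))
      ((volume.restrict (Ioi 0)).prod (volume.restrict (Ioi 0))) := by
  have hb : 0 < (π * s).re := by simpa using mul_pos Real.pi_pos hs
  have hprod := (integrable_sq_mul_cexp_neg_mul_sq hb).integrableOn.integrable.mul_prod hh
    (μ := volume.restrict (Ioi 0))
  have hbdd (z : ℝ × ℝ) : ‖(2 * π * Real.sinc (2 * π * z.1 * z.2) : ℂ)‖ ≤ 2 * π := by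
    have := mul_le_of_le_one_right Real.two_pi_pos.le
      (Real.abs_sinc_le_one (2 * π * z.1 * z.2))
    simpa [abs_of_pos Real.pi_pos] using this
  refine (hprod.bdd_mul (by fun_prop) (ae_of_all _ hbdd)).congr (ae_of_all _ fun ⟨x, u⟩ ↦ ?_)
  -- The vanishing of the sine at `u = 0` supplies the factor `u` that makes `h` integrable.
  have hsinc : (2 * π * x * u) * Real.sinc (2 * π * x * u) = Real.sin (2 * π * x * u) := by
    obtain hzero | hne := eq_or_ne (2 * π * x * u) 0
    · simp [hzero]
    · rw [Real.sinc_of_ne_zero hne, mul_div_cancel₀ _ hne]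
  rw [Function.uncurry_apply_pair, ← hsinc]
  push_cast
  ring

lemma integral_gaussian_mul_sineTransform {s : ℂ} (hs : 0 < s.re) {h : ℝ → ℂ}
    (hh : IntegrableOn (fun u : ℝ ↦ u * h u) (Ioi 0)) :
    ∫ x in Ioi (0 : ℝ), x * Complex.exp (-(π * s) * x ^ 2) *
        ∫ u in Ioi (0 : ℝ), Real.sin (2 * π * x * u) * h u =
      s⁻¹ * s⁻¹ ^ (1 / 2 : ℂ) / 2 *
        ∫ u in Ioi (0 : ℝ), u * h u * Complex.exp (-(π * s⁻¹) * u ^ 2) := by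
  have hb : 0 < (π * s).re := by simpa using mul_pos Real.pi_pos hs
  simp_rw [← integral_const_mul]
  rw [integral_integral_swap (integrable_gaussian_mul_sin_mul hs hh)]
  refine integral_congr_ae (ae_of_all _ fun u ↦ ?_)
  have hpull (x : ℝ) : x * Complex.exp (-(π * s) * x ^ 2) * (Real.sin (2 * π * x * u) * h u) =
      h u * (x * Real.sin (2 * π * u * x) * Complex.exp (-(π * s) * x ^ 2)) := by
    rw [mul_right_comm (2 * π) x u]
    ring
  have hexp : -((2 * π * u : ℝ) : ℂ) ^ 2 / (4 * (π * s)) = -(π * s⁻¹) * u ^ 2 := by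
    push_cast
    field_simp
    ring
  simp_rw [hpull]
  rw [integral_const_mul, integral_mul_sin_mul_cexp_neg_mul_sq hb, hexp,
    div_mul_cancel_left₀ (by simp)]
  push_cast
  field_simp
  ring

/-- The Laplace transform of the weight `1 / (e^{2π√x} - 1)`, normalised with `π` in the exponent so
that its functional equation exchanges `s` and `1 / s` and its value at `-in` is
`R_C(0, n) + i (Υ(n) - 1 / (2πn))`. -/
noncomputable def boseLaplace (s : ℂ) : ℂ :=
  ∫ x in Ioi (0 : ℝ), boseKernel √x * Complex.exp (-(π * s * x))

lemma norm_boseKernel_mul_cexp_le {s : ℂ} (hs : 0 ≤ s.re) {x : ℝ} (hx : 0 ≤ x) :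
    ‖(boseKernel √x : ℂ) * Complex.exp (-(π * s * x))‖ ≤ boseKernel √x := by
  have hg := boseKernel_nonneg (Real.sqrt_nonneg x)
  rw [norm_mul, Complex.norm_real, Real.norm_of_nonneg hg]
  refine mul_le_of_le_one_right hg ?_
  rw [Complex.norm_exp, Real.exp_le_one_iff]
  simpa using by positivity

lemma integrableOn_boseKernel_mul_cexp {s : ℂ} (hs : 0 ≤ s.re) :
    IntegrableOn (fun x : ℝ ↦ (boseKernel √x : ℂ) * Complex.exp (-(π * s * x))) (Ioi 0) :=
  integrableOn_boseKernel_sqrt.mono' (by fun_prop) <| by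
    filter_upwards [ae_restrict_mem measurableSet_Ioi] with x (hx : 0 < x)
    exact norm_boseKernel_mul_cexp_le hs hx.le

lemma continuousOn_boseLaplace : ContinuousOn boseLaplace {s | 0 ≤ s.re} := by
  refine continuousOn_of_dominated (bound := fun x ↦ boseKernel √x) (fun _ _ ↦ by fun_prop)
    (fun s hs ↦ ?_) integrableOn_boseKernel_sqrt (ae_of_all _ fun x ↦ by fun_prop)
  filter_upwards [ae_restrict_mem measurableSet_Ioi] with x (hx : 0 < x)
  exact norm_boseKernel_mul_cexp_le hs hx.le

lemma boseLaplace_conj (s : ℂ) :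
    boseLaplace (starRingEnd ℂ s) = starRingEnd ℂ (boseLaplace s) := by
  simp [boseLaplace, ← integral_conj, ← Complex.exp_conj]

lemma re_boseLaplace_neg_mul_I (y : ℝ) :
    (boseLaplace (-(y * Complex.I))).re =
      ∫ x in Ioi (0 : ℝ), Real.cos (π * y * x) / (Real.exp (2 * π * √x) - 1) := by
  refine (integral_re (integrableOn_boseKernel_mul_cexp (by simp))).symm.trans ?_
  refine integral_congr_ae (ae_of_all _ fun x ↦ ?_)
  beta_reduce
  rw [RCLike.re_to_complex, Complex.re_ofReal_mul, Complex.exp_re, boseKernel, div_eq_inv_mul]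
  simp

lemma im_boseLaplace_neg_mul_I (y : ℝ) :
    (boseLaplace (-(y * Complex.I))).im =
      ∫ x in Ioi (0 : ℝ), Real.sin (π * y * x) / (Real.exp (2 * π * √x) - 1) := by
  refine (integral_im (integrableOn_boseKernel_mul_cexp (by simp))).symm.trans ?_
  refine integral_congr_ae (ae_of_all _ fun x ↦ ?_)
  beta_reduce
  rw [RCLike.im_to_complex, Complex.im_ofReal_mul, Complex.exp_im, boseKernel, div_eq_inv_mul]
  simp

lemma boseLaplace_eq_integral_gaussian (s : ℂ) :
    boseLaplace s =
      2 * ∫ u in Ioi (0 : ℝ), u * boseKernel u * Complex.exp (-(π * s) * u ^ 2) := by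
  rw [boseLaplace, ← integral_comp_rpow_Ioi_of_pos two_pos, ← integral_const_mul]
  refine setIntegral_congr_fun measurableSet_Ioi fun u (hu : 0 < u) ↦ ?_
  have hexponent : (2 - 1 : ℝ) = 1 := by norm_num
  simp only [Real.rpow_ofNat, hexponent, Real.rpow_one, Real.sqrt_sq hu.le, Complex.real_smul]
  push_cast
  ring_nf

lemma integral_gaussian_mul_sineTransform_boseKernel {s : ℂ} (hs : 0 < s.re) :
    ∫ x in Ioi (0 : ℝ), x * Complex.exp (-(π * s) * x ^ 2) *
        ∫ u in Ioi (0 : ℝ), (Real.sin (2 * π * x * u) : ℂ) * boseKernel u =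
      boseLaplace s / 4 + s⁻¹ / (8 * π) - s⁻¹ ^ (1 / 2 : ℂ) / (8 * π) := by
  have hb : 0 < (π * s).re := by simpa using mul_pos Real.pi_pos hs
  have hG : IntegrableOn (fun x : ℝ ↦ 1 / (4 * π) * Complex.exp (-(π * s) * x ^ 2)) (Ioi 0) :=
    (integrable_cexp_neg_mul_sq hb).integrableOn.const_mul _
  have hxG : IntegrableOn (fun x : ℝ ↦ 1 / 4 * (x * Complex.exp (-(π * s) * x ^ 2))) (Ioi 0) :=
    (integrable_mul_cexp_neg_mul_sq hb).integrableOn.const_mul _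
  have hgG : IntegrableOn
      (fun x : ℝ ↦ 1 / 2 * (x * boseKernel x * Complex.exp (-(π * s) * x ^ 2))) (Ioi 0) := by
    refine (integrableOn_mul_boseKernel_ofReal.mul_bdd (c := 1) (by fun_prop)
      (ae_of_all _ fun x ↦ ?_)).const_mul _
    rw [norm_cexp_neg_mul_sq, Real.exp_le_one_iff]
    nlinarith [sq_nonneg x]
  have hself {x : ℝ} (hx : 0 < x) : x * Complex.exp (-(π * s) * x ^ 2) *
        ∫ u in Ioi (0 : ℝ), (Real.sin (2 * π * x * u) : ℂ) * boseKernel u =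
      1 / 2 * (x * boseKernel x * Complex.exp (-(π * s) * x ^ 2)) +
        1 / 4 * (x * Complex.exp (-(π * s) * x ^ 2)) -
        1 / (4 * π) * Complex.exp (-(π * s) * x ^ 2) := by
    have hxc : (x : ℂ) ≠ 0 := by exact_mod_cast hx.ne'
    simp_rw [← Complex.ofReal_mul (Real.sin _)]
    rw [integral_complex_ofReal, integral_sin_mul_boseKernel hx.ne']
    push_cast
    field_simp
  rw [setIntegral_congr_fun measurableSet_Ioi fun x hx ↦ hself hx, integral_sub
    (hgG.fun_add hxG) hG, integral_add hgG hxG, integral_const_mul, integral_const_mul,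
    integral_const_mul, integral_gaussian_complex_Ioi hb, integral_mul_cexp_neg_mul_sq hb,
    div_mul_cancel_left₀ (by simp), boseLaplace_eq_integral_gaussian]
  generalize ∫ u in Ioi (0 : ℝ), (u * boseKernel u * Complex.exp (-(π * s) * u ^ 2) : ℂ) = J
  field_simp
  ring

lemma boseLaplace_eq_inv_of_re_pos {s : ℂ} (hs : 0 < s.re) :
    boseLaplace s = (s⁻¹ ^ (1 / 2 : ℂ) - s⁻¹) / (2 * π) +
      s⁻¹ * s⁻¹ ^ (1 / 2 : ℂ) * boseLaplace s⁻¹ := by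
  have hself := integral_gaussian_mul_sineTransform_boseKernel hs
  rw [integral_gaussian_mul_sineTransform hs integrableOn_mul_boseKernel_ofReal] at hself
  rw [boseLaplace_eq_integral_gaussian s⁻¹]
  linear_combination -4 * hself

lemma boseLaplace_eq_inv {s : ℂ} (hs : 0 ≤ s.re) (hs0 : s ≠ 0) :
    boseLaplace s = (s⁻¹ ^ (1 / 2 : ℂ) - s⁻¹) / (2 * π) +
      s⁻¹ * s⁻¹ ^ (1 / 2 : ℂ) * boseLaplace s⁻¹ := by
  have hre {z : ℂ} (hz : 0 ≤ z.re) : 0 ≤ (z⁻¹).re := by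
    rw [Complex.inv_re]
    exact div_nonneg hz (Complex.normSq_nonneg z)
  have hslit {z : ℂ} (hz : 0 ≤ z.re) (hz0 : z ≠ 0) : z ∈ Complex.slitPlane :=
    hz.lt_or_eq.imp_right fun hre0 him ↦ hz0 (Complex.ext hre0.symm him)
  have hpos : EqOn boseLaplace (fun z ↦ (z⁻¹ ^ (1 / 2 : ℂ) - z⁻¹) / (2 * π) +
      z⁻¹ * z⁻¹ ^ (1 / 2 : ℂ) * boseLaplace z⁻¹) {z | 0 < z.re} :=
    fun z hz ↦ boseLaplace_eq_inv_of_re_pos hz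
  refine hpos.of_subset_closure (t := {z | 0 ≤ z.re ∧ z ≠ 0})
    (continuousOn_boseLaplace.mono fun z hz ↦ hz.1) ?_ ?_ ?_ ⟨hs, hs0⟩
  · have hinv : ContinuousOn (fun z : ℂ ↦ z⁻¹) {z | 0 ≤ z.re ∧ z ≠ 0} :=
      continuousOn_inv₀.mono fun z hz ↦ hz.2
    have hroot := hinv.cpow_const (b := (1 / 2 : ℂ)) fun z hz ↦ hslit (hre hz.1) (inv_ne_zero hz.2)
    have hL := continuousOn_boseLaplace.comp hinv fun z hz ↦ hre hz.1
    exact ((hroot.sub hinv).div_const _).add ((hinv.mul hroot).mul hL)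
  · exact fun z hz ↦ ⟨le_of_lt hz, fun h ↦ by simp [h] at hz⟩
  · rw [Complex.closure_setOfPred_lt_re]
    exact fun z hz ↦ hz.1

lemma mul_I_cpow_half {y : ℝ} (hy : 0 ≤ y) :
    (y * Complex.I) ^ (1 / 2 : ℂ) = √(2 * y) / 2 * (1 + Complex.I) := by
  obtain rfl | hy := hy.eq_or_lt
  · simp
  have hr : (√(2 * y) : ℂ) ^ 2 = 2 * y := by
    exact_mod_cast Real.sq_sqrt (by positivity : 0 ≤ 2 * y)
  have hsq : (y * Complex.I : ℂ) = (√(2 * y) / 2 * (1 + Complex.I)) ^ 2 := by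
    linear_combination (-(1 + Complex.I) ^ 2 / 4) * hr - y / 2 * Complex.I_sq
  have hre : 0 < (√(2 * y) / 2 * (1 + Complex.I) : ℂ).re := by
    simpa [← Complex.ofReal_ofNat, ← Complex.ofReal_div] using hy
  rw [hsq, one_div, Complex.sq_cpow_two_inv hre]

lemma boseLaplace_neg_mul_I {n : ℝ} (hn : 0 < n) :
    boseLaplace (-(n * Complex.I)) =
      (√(2 / n) / 2 * (1 + Complex.I) - (1 / n : ℝ) * Complex.I) / (2 * π) +
        (1 / n : ℝ) * Complex.I * (√(2 / n) / 2 * (1 + Complex.I)) *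
          starRingEnd ℂ (boseLaplace (-((1 / n : ℝ) * Complex.I))) := by
  have hinv : (-(n * Complex.I) : ℂ)⁻¹ = (1 / n : ℝ) * Complex.I := by simp [mul_comm]
  rw [boseLaplace_eq_inv (by simp) (by simp [hn.ne']), hinv, mul_I_cpow_half (by positivity),
    mul_one_div, ← boseLaplace_conj]
  simp

lemma re_add_im_boseLaplace_neg_mul_I {n : ℝ} (hn : 0 < n) :
    (boseLaplace (-(n * Complex.I))).re + (boseLaplace (-(n * Complex.I))).im =
      (√(2 / n) - 1 / n) / (2 * π) +
        √(2 / n) / n * (boseLaplace (-((1 / n : ℝ) * Complex.I))).im := by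
  rw [boseLaplace_neg_mul_I hn]
  generalize boseLaplace (-((1 / n : ℝ) * Complex.I)) = w
  have hreal : (√(2 / n) / 2 * (1 + Complex.I) - (1 / n : ℝ) * Complex.I) / (2 * π) +
        (1 / n : ℝ) * Complex.I * (√(2 / n) / 2 * (1 + Complex.I)) * starRingEnd ℂ w =
      ((√(2 / n) / (4 * π) : ℝ) : ℂ) * (1 + Complex.I) -
        ((1 / (2 * π * n) : ℝ) : ℂ) * Complex.I +
        ((√(2 / n) / (2 * n) : ℝ) : ℂ) * ((Complex.I - 1) * starRingEnd ℂ w) := by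
    push_cast
    linear_combination (√(2 / n) / (2 * n) : ℂ) * starRingEnd ℂ w * Complex.I_sq
  rw [hreal]
  simp only [Complex.add_re, Complex.add_im, Complex.sub_re, Complex.sub_im, Complex.mul_re,
    Complex.mul_im, Complex.conj_re, Complex.conj_im, Complex.I_re, Complex.I_im, Complex.one_re,
    Complex.one_im, Complex.ofReal_re, Complex.ofReal_im]
  field_simp
  ring

/-- Ramanujan's reciprocity: `R_C(0,n) = (1/n)√(2/n) Υ(1/n) − Υ(n)`, where
`Υ(n) = 1/(2πn) + ∫_0^∞ sin(πnx)/(e^{2π√x} − 1) dx` and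
`R_C(0,n) = ∫_0^∞ cos(πnx)/(e^{2π√x} − 1) dx`. -/
theorem ramanujan_cosine_reciprocity (n : ℝ) (hn : 0 < n) :
    (∫ x in Ioi (0:ℝ), Real.cos (π * n * x) / (Real.exp (2 * π * Real.sqrt x) - 1)) =
      (1 / n) * Real.sqrt (2 / n) *
        (1 / (2 * π * (1 / n)) +
          ∫ x in Ioi (0:ℝ), Real.sin (π * (1 / n) * x) / (Real.exp (2 * π * Real.sqrt x) - 1))
      - (1 / (2 * π * n) +
          ∫ x in Ioi (0:ℝ), Real.sin (π * n * x) / (Real.exp (2 * π * Real.sqrt x) - 1)) := by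
  have hsum := re_add_im_boseLaplace_neg_mul_I hn
  rw [← re_boseLaplace_neg_mul_I, ← im_boseLaplace_neg_mul_I, ← im_boseLaplace_neg_mul_I,
    eq_sub_of_add_eq hsum]
  field_simp
  ring
end
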